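/- arXiv:2007.09895 — 10 statements merged into one kernel-verified Lean document; each statement's English description precedes it below -/
import Mathlib

section
/- Let 0 < ε ≤ 1/2 and let D be a distribution over [N] with d_TV(D, U) ≤ 1 − 3ε. Then there exists an integer t with 1.01^{t+1} ≥ ε and 1.01^t ≤ 1/ε such that both Σ_{x ∈ [N] : 1.01^t/N ≤ D(x) ≤ 1.01^{t+1}/N} D(x) ≥ ε/(210·ln(1/ε)) and (1/N)·|{x ∈ [N] : 1.01^t/N ≤ D(x) ≤ 1.01^{t+1}/N}| ≥ ε/(210·ln(1/ε)). -/
open Finset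

/-!
For distributions `P` and `Q`, the overlap `∑ min (P x) (Q x)` equals `1 - d_TV(P, Q)`, so it is at
least `3ε`. The points with `P x ≤ ε * Q x` contribute at most `ε` to it, and so do those with
`Q x ≤ ε * P x`, so the points whose likelihood ratio lies between `ε` and `1/ε` contribute at least
`ε`. Cut that range of ratios geometrically into at most `2 * logb b (1/ε) + 2` levels: one of them
carries at least the average overlap, and `min (P x) (Q x)` bounds both masses from below.
-/

section Overlap

variable {ι 𝕜 : Type*} [Field 𝕜] [LinearOrder 𝕜] [IsStrictOrderedRing 𝕜]

lemma sum_min_eq_one_sub_half_sum_abs_sub {s : Finset ι} {P Q : ι → 𝕜}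
    (hP : ∑ x ∈ s, P x = 1) (hQ : ∑ x ∈ s, Q x = 1) :
    ∑ x ∈ s, min (P x) (Q x) = 1 - 1 / 2 * ∑ x ∈ s, |P x - Q x| := by
  have hmin (x : ι) : min (P x) (Q x) = 1 / 2 * (P x + Q x - |P x - Q x|) := by
    linarith [min_add_max (P x) (Q x), max_sub_min_eq_abs' (P x) (Q x)]
  simp only [hmin, ← mul_sum, sum_sub_distrib, sum_add_distrib, hP, hQ]
  ring

lemma min_le_mul_add_mul_add_ite {p q ε : 𝕜} (hp : 0 ≤ p) (hq : 0 ≤ q) (hε : 0 ≤ ε) :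
    min p q ≤ ε * p + ε * q + if ε * q < p ∧ ε * p < q then min p q else 0 := by
  have hεp := mul_nonneg hε hp
  have hεq := mul_nonneg hε hq
  split_ifs with h
  · linarith
  · rcases not_and_or.mp h with h | h
    · linarith [min_le_left p q]
    · linarith [min_le_right p q]

lemma sum_min_le_add_sum_filter {s : Finset ι} {P Q : ι → 𝕜} {ε : 𝕜}
    (hP : ∀ x ∈ s, 0 ≤ P x) (hQ : ∀ x ∈ s, 0 ≤ Q x) (hε : 0 ≤ ε) :
    ∑ x ∈ s, min (P x) (Q x) ≤ ε * ∑ x ∈ s, P x + ε * ∑ x ∈ s, Q x +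
      ∑ x ∈ s with ε * Q x < P x ∧ ε * P x < Q x, min (P x) (Q x) := by
  rw [sum_filter, mul_sum, mul_sum, ← sum_add_distrib, ← sum_add_distrib]
  exact sum_le_sum fun x hx => min_le_mul_add_mul_add_ite (hP x hx) (hQ x hx) hε

end Overlap

lemma exists_le_sum_of_cover {ι κ M : Type*} [AddCommMonoid M] [LinearOrder M]
    [IsOrderedCancelAddMonoid M]
    {s : Finset ι} {T : Finset κ} {A : κ → Finset ι} {w : ι → M} {c : M}
    (hT : T.Nonempty) (hw : ∀ t ∈ T, ∀ x ∈ A t, 0 ≤ w x) (hA : ∀ x ∈ s, ∃ t ∈ T, x ∈ A t)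
    (hc : #T • c ≤ ∑ x ∈ s, w x) : ∃ t ∈ T, c ≤ ∑ x ∈ A t, w x := by
  classical
  have : Nonempty κ := hT.to_type
  choose! hole hole_mem mem_hole using hA
  obtain ⟨t, ht, hct⟩ := exists_le_sum_fiber_of_maps_to_of_nsmul_le_sum hole_mem hT hc
  have hfiber : {x ∈ s | hole x = t} ⊆ A t := fun x hx => by
    obtain ⟨hxs, rfl⟩ := mem_filter.mp hx
    exact mem_hole x hxs
  exact ⟨t, ht, hct.trans (sum_le_sum_of_subset_of_nonneg hfiber fun x hx _ => hw t ht x hx)⟩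

/-- For `ε ≤ 1`, the exponents `t` for which `[b ^ t, b ^ (t + 1)]` meets `[ε, 1 / ε]`, see
`mem_scales`; the integer interval is explicit so that it can be counted. -/
noncomputable def scales (b ε : ℝ) : Finset ℤ :=
  Icc (-(⌊Real.logb b (1 / ε)⌋ + 1)) ⌊Real.logb b (1 / ε)⌋

section Scales

variable {b ε : ℝ}

lemma le_floor_logb_iff_zpow_le {y : ℝ} (hb : 1 < b) (hy : 0 < y) {n : ℤ} :
    n ≤ ⌊Real.logb b y⌋ ↔ b ^ n ≤ y := by
  rw [Int.le_floor, Real.le_logb_iff_rpow_le hb hy, Real.rpow_intCast]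

lemma mem_scales (hb : 1 < b) (hε : 0 < ε) {t : ℤ} :
    t ∈ scales b ε ↔ ε ≤ b ^ (t + 1) ∧ b ^ t ≤ 1 / ε := by
  have hε' : 0 < 1 / ε := one_div_pos.mpr hε
  have hlower : -(⌊Real.logb b (1 / ε)⌋ + 1) ≤ t ↔ ε ≤ b ^ (t + 1) := by
    rw [← inv_le_inv₀ (zpow_pos (one_pos.trans hb) _) hε, ← zpow_neg, ← one_div ε,
      ← le_floor_logb_iff_zpow_le hb hε']
    omega
  rw [scales, mem_Icc, hlower, le_floor_logb_iff_zpow_le hb hε']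

lemma scales_nonempty (hb : 1 < b) (hε0 : 0 < ε) (hε1 : ε ≤ 1) : (scales b ε).Nonempty :=
  ⟨0, (mem_scales hb hε0).mpr
    ⟨by simpa using hε1.trans hb.le, by simpa using (one_le_inv₀ hε0).mpr hε1⟩⟩

lemma card_scales_le (hb : 1 < b) (hε0 : 0 < ε) (hε1 : ε ≤ 1) :
    (#(scales b ε) : ℝ) ≤ 2 * Real.logb b (1 / ε) + 2 := by
  have hfloor : 0 ≤ ⌊Real.logb b (1 / ε)⌋ :=
    Int.floor_nonneg.mpr (Real.logb_nonneg hb ((one_le_div₀ hε0).mpr hε1))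
  have hcard : (#(scales b ε) : ℤ) = 2 * ⌊Real.logb b (1 / ε)⌋ + 2 := by
    rw [scales, Int.card_Icc]
    omega
  have hcard' : (#(scales b ε) : ℝ) = 2 * ⌊Real.logb b (1 / ε)⌋ + 2 := mod_cast hcard
  linarith [Int.floor_le (Real.logb b (1 / ε))]

lemma exists_mem_scales_zpow_mul_le {p q : ℝ} (hb : 1 < b) (hε : 0 < ε) (hp : 0 < p) (hq : 0 < q)
    (hqp : ε * q ≤ p) (hpq : ε * p ≤ q) :
    ∃ t ∈ scales b ε, b ^ t * q ≤ p ∧ p ≤ b ^ (t + 1) * q := by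
  obtain ⟨t, htlower, htupper⟩ := exists_mem_Ico_zpow (div_pos hp hq) hb
  have hratio_ge : ε ≤ p / q := (le_div_iff₀ hq).mpr hqp
  have hratio_le : p / q ≤ 1 / ε := by
    rw [div_le_div_iff₀ hq hε]
    linarith
  exact ⟨t, (mem_scales hb hε).mpr ⟨hratio_ge.trans htupper.le, htlower.trans hratio_le⟩,
    (le_div_iff₀ hq).mp htlower, (div_le_iff₀ hq).mp htupper.le⟩

end Scales

/-- The points of `s` at which the likelihood ratio `P x / Q x` lies in `[b ^ t, b ^ (t + 1)]`. The
bounds are multiplied out, so points with `P x = Q x = 0` belong to every level. -/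
noncomputable def ratioLevel {ι : Type*} (s : Finset ι) (P Q : ι → ℝ) (b : ℝ) (t : ℤ) : Finset ι :=
  {x ∈ s | b ^ t * Q x ≤ P x ∧ P x ≤ b ^ (t + 1) * Q x}

section RatioLevel

variable {ι : Type*} {s : Finset ι} {P Q : ι → ℝ} {b ε : ℝ}

lemma exists_mem_scales_mem_ratioLevel (hP : ∀ x ∈ s, 0 ≤ P x) (hQ : ∀ x ∈ s, 0 ≤ Q x)
    (hb : 1 < b) (hε : 0 < ε) {x : ι} (hx : x ∈ s) (hQP : ε * Q x < P x) (hPQ : ε * P x < Q x) :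
    ∃ t ∈ scales b ε, x ∈ ratioLevel s P Q b t := by
  have hPx : 0 < P x := (mul_nonneg hε.le (hQ x hx)).trans_lt hQP
  have hQx : 0 < Q x := (mul_nonneg hε.le (hP x hx)).trans_lt hPQ
  obtain ⟨t, ht, hlevel⟩ := exists_mem_scales_zpow_mul_le hb hε hPx hQx hQP.le hPQ.le
  exact ⟨t, ht, mem_filter.mpr ⟨hx, hlevel⟩⟩

lemma exists_mem_scales_le_sum_min_ratioLevel (hP0 : ∀ x ∈ s, 0 ≤ P x) (hQ0 : ∀ x ∈ s, 0 ≤ Q x)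
    (hP1 : ∑ x ∈ s, P x = 1) (hQ1 : ∑ x ∈ s, Q x = 1) (hb : 1 < b) (hε : 0 < ε)
    (htv : 1 / 2 * ∑ x ∈ s, |P x - Q x| ≤ 1 - 3 * ε) :
    ∃ t ∈ scales b ε, ε / (2 * Real.logb b (1 / ε) + 2) ≤
      ∑ x ∈ ratioLevel s P Q b t, min (P x) (Q x) := by
  have hbulk : ε ≤ ∑ x ∈ s with ε * Q x < P x ∧ ε * P x < Q x, min (P x) (Q x) := by
    have hoverlap := sum_min_le_add_sum_filter hP0 hQ0 hε.le
    rw [sum_min_eq_one_sub_half_sum_abs_sub hP1 hQ1, hP1, hQ1] at hoverlap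
    linarith
  have hε1 : ε ≤ 1 := by
    have htv0 : 0 ≤ ∑ x ∈ s, |P x - Q x| := sum_nonneg fun x _ => abs_nonneg _
    linarith
  have hne := scales_nonempty hb hε hε1
  refine exists_le_sum_of_cover hne (fun t _ x hx => ?_) (fun x hx => ?_) ?_
    (s := {x ∈ s | ε * Q x < P x ∧ ε * P x < Q x})
  · have hxs := (mem_filter.mp hx).1
    exact le_min (hP0 x hxs) (hQ0 x hxs)
  · obtain ⟨hxs, hQP, hPQ⟩ := mem_filter.mp hx
    exact exists_mem_scales_mem_ratioLevel hP0 hQ0 hb hε hxs hQP hPQ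
  · have hcard := card_scales_le hb hε hε1
    have hcard_pos : (0 : ℝ) < #(scales b ε) := mod_cast hne.card_pos
    refine le_trans ?_ hbulk
    rw [nsmul_eq_mul, mul_div_assoc', div_le_iff₀ (hcard_pos.trans_le hcard), mul_comm]
    exact mul_le_mul_of_nonneg_left hcard hε.le

theorem exists_good_scale_of_tv_le_general (hP0 : ∀ x ∈ s, 0 ≤ P x) (hQ0 : ∀ x ∈ s, 0 ≤ Q x)
    (hP1 : ∑ x ∈ s, P x = 1) (hQ1 : ∑ x ∈ s, Q x = 1) (hb : 1 < b) (hε : 0 < ε)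
    (htv : 1 / 2 * ∑ x ∈ s, |P x - Q x| ≤ 1 - 3 * ε) :
    ∃ t : ℤ, ε ≤ b ^ (t + 1) ∧ b ^ t ≤ 1 / ε ∧
      ε / (2 * Real.logb b (1 / ε) + 2) ≤ ∑ x ∈ ratioLevel s P Q b t, P x ∧
      ε / (2 * Real.logb b (1 / ε) + 2) ≤ ∑ x ∈ ratioLevel s P Q b t, Q x := by
  obtain ⟨t, ht, hmin⟩ :=
    exists_mem_scales_le_sum_min_ratioLevel hP0 hQ0 hP1 hQ1 hb hε htv
  obtain ⟨hlower, hupper⟩ := (mem_scales hb hε).mp ht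
  exact ⟨t, hlower, hupper, hmin.trans (sum_le_sum fun x _ => min_le_left _ _),
    hmin.trans (sum_le_sum fun x _ => min_le_right _ _)⟩

end RatioLevel

lemma div_mul_log_le_div_logb_add_two {ε : ℝ} (hε0 : 0 < ε) (hε1 : ε ≤ 1 / 2) :
    ε / (210 * Real.log (1 / ε)) ≤ ε / (2 * Real.logb 1.01 (1 / ε) + 2) := by
  have hinv : 2 ≤ 1 / ε := (le_div_iff₀ hε0).mpr (by linarith)
  have hlog : 1 / 2 ≤ Real.log (1 / ε) := by
    linarith [Real.log_le_log two_pos hinv, Real.log_two_gt_d9]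
  have hlog_base : 1 / 101 ≤ Real.log 1.01 := by
    linarith [Real.one_sub_inv_le_log_of_pos (x := 1.01) (by norm_num)]
  have hlogb0 : 0 ≤ Real.logb 1.01 (1 / ε) := Real.logb_nonneg (by norm_num) (by linarith)
  have hlogb : Real.logb 1.01 (1 / ε) ≤ 101 * Real.log (1 / ε) := by
    rw [Real.logb, div_le_iff₀ (by linarith)]
    nlinarith
  exact div_le_div_of_nonneg_left hε0.le (by linarith) (by linarith)

/-- If `d_TV(D, U) ≤ 1 − 3ε` then there is an integer `t` with `1.01^(t+1) ≥ ε` and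
`1.01^t ≤ 1/ε` such that both the `D`-mass and the uniform mass of
`{x : 1.01^t/N ≤ D(x) ≤ 1.01^(t+1)/N}` are at least `ε/(210·ln(1/ε))`. -/
theorem exists_good_scale_of_tv_le
    (N : ℕ) (D : ℕ → ℝ) (ε : ℝ) (hε0 : 0 < ε) (hε1 : ε ≤ 1 / 2)
    (hD0 : ∀ i ∈ Icc 1 N, 0 ≤ D i) (hD1 : ∑ i ∈ Icc 1 N, D i = 1)
    (htv : (1 / 2) * ∑ i ∈ Icc 1 N, |D i - 1 / N| ≤ 1 - 3 * ε) :
    ∃ t : ℤ, ε ≤ (1.01 : ℝ) ^ (t + 1) ∧ (1.01 : ℝ) ^ t ≤ 1 / ε ∧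
      ε / (210 * Real.log (1 / ε)) ≤
        ∑ x ∈ (Icc 1 N).filter
          (fun x => (1.01 : ℝ) ^ t / N ≤ D x ∧ D x ≤ (1.01 : ℝ) ^ (t + 1) / N), D x ∧
      ε / (210 * Real.log (1 / ε)) ≤
        (1 / (N : ℝ)) * (((Icc 1 N).filter
          (fun x => (1.01 : ℝ) ^ t / N ≤ D x ∧ D x ≤ (1.01 : ℝ) ^ (t + 1) / N)).card : ℝ) := by
  have hN : N ≠ 0 := by
    rintro rfl
    simp at hD1
  have hU1 : ∑ _i ∈ Icc 1 N, 1 / (N : ℝ) = 1 := by simp [hN]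
  obtain ⟨t, hlower, hupper, hDmass, hUmass⟩ := exists_good_scale_of_tv_le_general
    (b := 1.01) hD0 (fun _ _ => by positivity) hD1 hU1 (by norm_num) hε0 htv
  have hbound := div_mul_log_le_div_logb_add_two hε0 hε1
  rw [sum_const, nsmul_eq_mul, mul_comm _ (1 / (N : ℝ))] at hUmass
  simp only [ratioLevel, mul_one_div] at hDmass hUmass
  exact ⟨t, hlower, hupper, hbound.trans hDmass, hbound.trans hUmass⟩
end

section
/- Fix 0 < ε ≤ 1/2 and 0 < α ≤ 1/2, let ℓ ≥ 2, and let Q be a distribution over [ℓ] with q_i = Q(i). Suppose that d_TV(Q, Q') ≥ ε for every distribution Q' over [ℓ] satisfying the exponential property with parameter α. Then Σ_{i=2}^ℓ max(0, q_i − (1+α)·q_{i−1}) ≥ α·ε/2. -/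
open Finset

/-!
Let `M` be the least function above `Q` with the exponential property: `M ℓ = Q ℓ`
and `M k = max (Q k) (M (k + 1) / (1 + α))`. The excess `e = M - Q` satisfies
`(1 + α) e_k ≤ max(0, q_{k+1} - (1 + α) q_k) + e_{k+1}` for `k < ℓ` and `e_ℓ = 0`. Summing over `k`,
the total excess `E` is at most `1/α` times the total violation. Normalizing `M` to total mass `1`
moves it by `E` in `ℓ¹`, just as passing from `Q` to `M` does, so the resulting distribution is
within total variation distance `E` of `Q`.
-/

section Distributions

variable {ι : Type*} {s : Finset ι} {P M : ι → ℝ}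

/-- `P` is a probability distribution on the finite set `s`; its values outside `s` are
irrelevant. -/
structure IsDistributionOn (s : Finset ι) (P : ι → ℝ) : Prop where
  nonneg : ∀ i ∈ s, 0 ≤ P i
  sum_eq_one : ∑ i ∈ s, P i = 1

/-- The total variation distance `d_TV(P, Q)` on the finite set `s`, as half the `ℓ¹` distance. -/
noncomputable def tvDistOn (s : Finset ι) (P Q : ι → ℝ) : ℝ :=
  (1 / 2) * ∑ i ∈ s, |P i - Q i|

theorem isDistributionOn_div_sum (hM : ∀ i ∈ s, 0 ≤ M i) (hsum : 0 < ∑ i ∈ s, M i) :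
    IsDistributionOn s fun i => M i / ∑ j ∈ s, M j where
  nonneg i hi := div_nonneg (hM i hi) hsum.le
  sum_eq_one := by rw [← sum_div, div_self hsum.ne']

theorem sum_abs_sub_div_sum (hM : ∀ i ∈ s, 0 ≤ M i) (hsum : 1 ≤ ∑ i ∈ s, M i) :
    ∑ i ∈ s, |M i - M i / ∑ j ∈ s, M j| = ∑ i ∈ s, M i - 1 := by
  have hdiv_le : ∀ i ∈ s, M i / ∑ j ∈ s, M j ≤ M i := fun i hi => div_le_self (hM i hi) hsum
  rw [sum_congr rfl fun i hi => abs_of_nonneg (sub_nonneg.2 (hdiv_le i hi)), sum_sub_distrib,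
    ← sum_div, div_self (by linarith)]

namespace IsDistributionOn

theorem one_le_sum_of_le (hP : IsDistributionOn s P) (hPM : ∀ i ∈ s, P i ≤ M i) :
    1 ≤ ∑ i ∈ s, M i :=
  hP.sum_eq_one.symm.trans_le (sum_le_sum hPM)

theorem tvDistOn_div_sum_le (hP : IsDistributionOn s P) (hPM : ∀ i ∈ s, P i ≤ M i) :
    tvDistOn s P (fun i => M i / ∑ j ∈ s, M j) ≤ ∑ i ∈ s, (M i - P i) := by
  have hM : ∀ i ∈ s, 0 ≤ M i := fun i hi => (hP.nonneg i hi).trans (hPM i hi)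
  have hraise : ∑ i ∈ s, |P i - M i| = ∑ i ∈ s, (M i - P i) :=
    sum_congr rfl fun i hi => by rw [abs_sub_comm, abs_of_nonneg (sub_nonneg.2 (hPM i hi))]
  have hnormalize : ∑ i ∈ s, |M i - M i / ∑ j ∈ s, M j| = ∑ i ∈ s, (M i - P i) := by
    rw [sum_abs_sub_div_sum hM (hP.one_le_sum_of_le hPM), sum_sub_distrib, hP.sum_eq_one]
  calc tvDistOn s P (fun i => M i / ∑ j ∈ s, M j)
      ≤ 1 / 2 * ∑ i ∈ s, (|P i - M i| + |M i - M i / ∑ j ∈ s, M j|) := by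
        unfold tvDistOn
        gcongr
        exact abs_sub_le _ _ _
    _ = ∑ i ∈ s, (M i - P i) := by
        rw [sum_add_distrib, hraise, hnormalize]
        ring

end IsDistributionOn

end Distributions

section ExponentialProperty

variable {α : ℝ} {ℓ k : ℕ} {Q : ℕ → ℝ}

/-- The exponential property with parameter `α` on `[ℓ] = {1, …, ℓ}`, for functions that need not
have total mass `1`. -/
def HasExponentialProperty (α : ℝ) (ℓ : ℕ) (Q : ℕ → ℝ) : Prop :=
  ∀ k, 1 ≤ k → k + 1 ≤ ℓ → Q (k + 1) ≤ (1 + α) * Q k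

theorem HasExponentialProperty.div_const (hQ : HasExponentialProperty α ℓ Q) {c : ℝ}
    (hc : 0 ≤ c) : HasExponentialProperty α ℓ fun k => Q k / c := fun k hk hkℓ => by
  rw [← mul_div_assoc]
  exact div_le_div_of_nonneg_right (hQ k hk hkℓ) hc

/-- The least function above `Q` with the exponential property on `[ℓ]`, when `-1 < α`; it is
computed from the right and agrees with `Q` from `ℓ` on. -/
noncomputable def exponentialEnvelope (α : ℝ) (ℓ : ℕ) (Q : ℕ → ℝ) (k : ℕ) : ℝ :=
  if k < ℓ then max (Q k) (exponentialEnvelope α ℓ Q (k + 1) / (1 + α)) else Q k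
termination_by ℓ - k

theorem exponentialEnvelope_of_lt (hk : k < ℓ) :
    exponentialEnvelope α ℓ Q k = max (Q k) (exponentialEnvelope α ℓ Q (k + 1) / (1 + α)) := by
  rw [exponentialEnvelope, if_pos hk]

theorem exponentialEnvelope_of_le (hk : ℓ ≤ k) : exponentialEnvelope α ℓ Q k = Q k := by
  rw [exponentialEnvelope, if_neg hk.not_gt]

theorem le_exponentialEnvelope (α : ℝ) (ℓ : ℕ) (Q : ℕ → ℝ) (k : ℕ) :
    Q k ≤ exponentialEnvelope α ℓ Q k := by
  rcases lt_or_ge k ℓ with hk | hk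
  · exact (le_max_left _ _).trans_eq (exponentialEnvelope_of_lt hk).symm
  · exact (exponentialEnvelope_of_le hk).ge

theorem hasExponentialProperty_exponentialEnvelope (hα : 0 < 1 + α) (ℓ : ℕ) (Q : ℕ → ℝ) :
    HasExponentialProperty α ℓ (exponentialEnvelope α ℓ Q) := fun k _ hk => by
  rw [← div_le_iff₀' hα, exponentialEnvelope_of_lt hk]
  exact le_max_right _ _

theorem mul_exponentialEnvelope_sub_le (hα : 0 < 1 + α) (hk : k < ℓ) :
    (1 + α) * (exponentialEnvelope α ℓ Q k - Q k) ≤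
      max 0 (Q (k + 1) - (1 + α) * Q k) +
        (exponentialEnvelope α ℓ Q (k + 1) - Q (k + 1)) := by
  have hexcess : 0 ≤ exponentialEnvelope α ℓ Q (k + 1) - Q (k + 1) :=
    sub_nonneg.2 (le_exponentialEnvelope α ℓ Q (k + 1))
  calc (1 + α) * (exponentialEnvelope α ℓ Q k - Q k)
      = max 0 (exponentialEnvelope α ℓ Q (k + 1) - (1 + α) * Q k) := by
        rw [exponentialEnvelope_of_lt hk, mul_sub, mul_max_of_nonneg _ _ hα.le,
          mul_div_cancel₀ _ hα.ne', ← max_sub_sub_right, sub_self]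
    _ ≤ _ := max_le (add_nonneg (le_max_left _ _) hexcess) (by
        linarith [le_max_right 0 (Q (k + 1) - (1 + α) * Q k)])

theorem mul_sum_exponentialEnvelope_sub_le (hα : 0 < 1 + α) (ℓ : ℕ) (Q : ℕ → ℝ) :
    α * ∑ k ∈ Icc 1 ℓ, (exponentialEnvelope α ℓ Q k - Q k) ≤
      ∑ i ∈ Icc 2 ℓ, max 0 (Q i - (1 + α) * Q (i - 1)) := by
  set e : ℕ → ℝ := fun k => exponentialEnvelope α ℓ Q k - Q k
  have hshift (f : ℕ → ℝ) : ∑ k ∈ Ico 1 ℓ, f (k + 1) = ∑ i ∈ Icc 2 ℓ, f i := by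
    rw [sum_Ico_add', Ico_add_one_right_eq_Icc]
  have hlast : ∑ k ∈ Ico 1 ℓ, e k = ∑ k ∈ Icc 1 ℓ, e k :=
    sum_subset Ico_subset_Icc_self fun k hk hk' =>
      sub_eq_zero.2 (exponentialEnvelope_of_le (by grind))
  have htail : ∑ i ∈ Icc 2 ℓ, e i ≤ ∑ i ∈ Icc 1 ℓ, e i :=
    sum_le_sum_of_subset_of_nonneg (Icc_subset_Icc_left one_le_two) fun k _ _ =>
      sub_nonneg.2 (le_exponentialEnvelope α ℓ Q k)
  have hsum : (1 + α) * ∑ k ∈ Icc 1 ℓ, e k ≤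
      ∑ i ∈ Icc 2 ℓ, max 0 (Q i - (1 + α) * Q (i - 1)) + ∑ i ∈ Icc 2 ℓ, e i := by
    rw [← hlast, mul_sum, ← sum_add_distrib, ← hshift]
    exact sum_le_sum fun k hk => mul_exponentialEnvelope_sub_le hα (mem_Ico.1 hk).2
  linarith

theorem IsDistributionOn.exists_hasExponentialProperty_mul_tvDistOn_le
    (hα : 0 ≤ α) (hQ : IsDistributionOn (Icc 1 ℓ) Q) :
    ∃ Q', IsDistributionOn (Icc 1 ℓ) Q' ∧ HasExponentialProperty α ℓ Q' ∧
      α * tvDistOn (Icc 1 ℓ) Q Q' ≤ ∑ i ∈ Icc 2 ℓ, max 0 (Q i - (1 + α) * Q (i - 1)) := by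
  have hα' : 0 < 1 + α := by positivity
  set M := exponentialEnvelope α ℓ Q
  have hQM : ∀ i ∈ Icc 1 ℓ, Q i ≤ M i := fun i _ => le_exponentialEnvelope α ℓ Q i
  have hM : ∀ i ∈ Icc 1 ℓ, 0 ≤ M i := fun i hi => (hQ.nonneg i hi).trans (hQM i hi)
  have hsum : 0 < ∑ i ∈ Icc 1 ℓ, M i := one_pos.trans_le (hQ.one_le_sum_of_le hQM)
  exact ⟨fun i => M i / ∑ j ∈ Icc 1 ℓ, M j, isDistributionOn_div_sum hM hsum,
    (hasExponentialProperty_exponentialEnvelope hα' ℓ Q).div_const hsum.le,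
    (mul_le_mul_of_nonneg_left (hQ.tvDistOn_div_sum_le hQM) hα).trans
      (mul_sum_exponentialEnvelope_sub_le hα' ℓ Q)⟩

theorem sum_max_violation_ge_of_far_from_exponential_general {ε : ℝ}
    (hα : 0 ≤ α) (hQ : IsDistributionOn (Icc 1 ℓ) Q)
    (hfar : ∀ Q', IsDistributionOn (Icc 1 ℓ) Q' → HasExponentialProperty α ℓ Q' →
      ε ≤ tvDistOn (Icc 1 ℓ) Q Q') :
    α * ε ≤ ∑ i ∈ Icc 2 ℓ, max 0 (Q i - (1 + α) * Q (i - 1)) := by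
  obtain ⟨Q', hQ', hexp, hnear⟩ := hQ.exists_hasExponentialProperty_mul_tvDistOn_le hα
  exact (mul_le_mul_of_nonneg_left (hfar Q' hQ' hexp) hα).trans hnear

end ExponentialProperty

/-- If a distribution `Q` over `[ℓ]` is `ε`-far in total variation distance from every
distribution satisfying the exponential property with parameter `α`, then
`Σ_{i=2}^ℓ max(0, q_i − (1+α)·q_{i−1}) ≥ α·ε/2`. -/
theorem sum_max_violation_ge_of_far_from_exponential
    (ℓ : ℕ) (hℓ : 2 ≤ ℓ) (ε α : ℝ) (hε0 : 0 < ε) (hε1 : ε ≤ 1 / 2)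
    (hα0 : 0 < α) (hα1 : α ≤ 1 / 2)
    (Q : ℕ → ℝ) (hQ0 : ∀ i ∈ Icc 1 ℓ, 0 ≤ Q i) (hQ1 : ∑ i ∈ Icc 1 ℓ, Q i = 1)
    (hfar : ∀ Q' : ℕ → ℝ, (∀ i ∈ Icc 1 ℓ, 0 ≤ Q' i) → (∑ i ∈ Icc 1 ℓ, Q' i = 1) →
      (∀ k, 1 ≤ k → k + 1 ≤ ℓ → Q' (k + 1) ≤ (1 + α) * Q' k) →
      ε ≤ (1 / 2) * ∑ i ∈ Icc 1 ℓ, |Q i - Q' i|) :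
    α * ε / 2 ≤ ∑ i ∈ Icc 2 ℓ, max 0 (Q i - (1 + α) * Q (i - 1)) :=
  (half_le_self (mul_pos hα0 hε0).le).trans <|
    sum_max_violation_ge_of_far_from_exponential_general hα0.le ⟨hQ0, hQ1⟩
      fun Q' hQ' hexp => hfar Q' hQ'.nonneg hQ'.sum_eq_one hexp
end

section
/- Let α > 0, let ℓ ≥ 1, and let q_1, …, q_ℓ be nonnegative reals. Define q'_i = max_{i ≤ s ≤ ℓ} q_s/(1+α)^{s−i} for each 1 ≤ i ≤ ℓ. Then: (i) q_i ≤ q'_i for all i; (ii) q'_i ≤ (1+α)·q'_{i−1} for all 2 ≤ i ≤ ℓ; and (iii) α·Σ_{i=1}^ℓ (q'_i − q_i) ≤ Σ_{i=2}^ℓ max(0, q_i − (1+α)·q_{i−1}). -/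
open Finset

/-!
On an interval `[m, n]` the upper envelope `q'` is computed backwards by `q' n = q n` and
`q' i = max (q i) (q' (i + 1) / (1 + α))`; (i) and (ii) are immediate from this.
For (iii), let `d i = q' i - q i` be the excess. The recursion gives
`(1 + α) * d i = max 0 (q' (i + 1) - (1 + α) * q i)`, which is at most
`d (i + 1) + max 0 (q (i + 1) - (1 + α) * q i)`. Thus `α * d i` is bounded by the increment
`d (i + 1) - d i` plus one term of the right-hand side of (iii), and the increments telescope to
`d n - d m = -d m ≤ 0`.
-/

theorem sum_Ico_le_sub_add_sum_Icc {G : Type*} [AddCommGroup G] [PartialOrder G]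
    [IsOrderedAddMonoid G] {f b d : ℕ → G} {m n : ℕ} (hmn : m ≤ n)
    (h : ∀ i ∈ Ico m n, f i ≤ d (i + 1) - d i + b (i + 1)) :
    ∑ i ∈ Ico m n, f i ≤ d n - d m + ∑ i ∈ Icc (m + 1) n, b i := by
  induction n, hmn using Nat.le_induction with
  | base => simp
  | succ n hmn ih =>
    have hinit : ∀ i ∈ Ico m n, f i ≤ d (i + 1) - d i + b (i + 1) := fun i hi =>
      h i (Ico_subset_Ico_right n.le_succ hi)
    have hlast := h n (mem_Ico.mpr ⟨hmn, n.lt_succ_self⟩)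
    rw [sum_Ico_succ_top hmn, sum_Icc_succ_top (by lia)]
    calc
      _ ≤ d n - d m + ∑ i ∈ Icc (m + 1) n, b i + (d (n + 1) - d n + b (n + 1)) :=
        add_le_add (ih hinit) hlast
      _ = d (n + 1) - d m + (∑ i ∈ Icc (m + 1) n, b i + b (n + 1)) := by abel

section

variable {K : Type*} [Field K] [LinearOrder K]

/-- `q'` is the upper envelope of `q` on `[m, n]` with growth ratio `r`, the least function above
`q` that grows by a factor of at most `r` per step when `0 < r`. It is a predicate on `q'`, whose
values outside `[m, n]` are unconstrained, because the maximum needs `i ≤ n` to be over a nonempty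
set. -/
def IsUpperEnvelope (r : K) (q q' : ℕ → K) (m n : ℕ) : Prop :=
  ∀ i, m ≤ i → ∀ hin : i ≤ n,
    q' i = (Icc i n).sup' (nonempty_Icc.mpr hin) fun s => q s / r ^ (s - i)

namespace IsUpperEnvelope

variable {r α : K} {q q' : ℕ → K} {m n i : ℕ}

theorem eq_right (h : IsUpperEnvelope r q q' m n) (hmn : m ≤ n) : q' n = q n := by
  simp [h n hmn le_rfl]

theorem le (h : IsUpperEnvelope r q q' m n) (hmi : m ≤ i) (hin : i ≤ n) : q i ≤ q' i := by
  rw [h i hmi hin]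
  exact le_sup'_of_le _ (left_mem_Icc.mpr hin) (by simp)

variable [IsStrictOrderedRing K]

theorem eq_max (h : IsUpperEnvelope r q q' m n) (hr : 0 ≤ r) (hmi : m ≤ i) (hin : i < n) :
    q' i = max (q i) (q' (i + 1) / r) := by
  have hne : (Icc (i + 1) n).Nonempty := nonempty_Icc.mpr hin
  have hshift : ∀ s ∈ Icc (i + 1) n, q s / r ^ (s - i) = q s / r ^ (s - (i + 1)) / r := by
    intro s hs
    have hs' : s - i = s - (i + 1) + 1 := by grind
    rw [hs', pow_succ, div_div]
  calc
    q' i = (insert i (Icc (i + 1) n)).sup' (insert_nonempty _ _) fun s => q s / r ^ (s - i) := by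
      simp only [h i hmi hin.le, insert_Icc_add_one_left_eq_Icc hin.le]
    _ = max (q i) ((Icc (i + 1) n).sup' hne fun s => q s / r ^ (s - i)) := by
      simp [sup'_insert hne]
    _ = max (q i) (q' (i + 1) / r) := by
      rw [h (i + 1) (by lia) hin, sup'_div₀ hr, sup'_congr hne rfl hshift]

theorem succ_le_mul (h : IsUpperEnvelope r q q' m n) (hr : 0 < r) (hmi : m ≤ i) (hin : i < n) :
    q' (i + 1) ≤ r * q' i := by
  rw [← div_le_iff₀' hr, h.eq_max hr.le hmi hin]
  exact le_max_right _ _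

theorem mul_sub_eq_max (h : IsUpperEnvelope r q q' m n) (hr : 0 < r) (hmi : m ≤ i)
    (hin : i < n) : r * (q' i - q i) = max 0 (q' (i + 1) - r * q i) := by
  rw [h.eq_max hr.le hmi hin, mul_sub, mul_max_of_nonneg _ _ hr.le, mul_div_cancel₀ _ hr.ne',
    ← max_sub_sub_right, sub_self]

theorem mul_sub_le (h : IsUpperEnvelope r q q' m n) (hr : 0 < r) (hmi : m ≤ i) (hin : i < n) :
    r * (q' i - q i) ≤ q' (i + 1) - q (i + 1) + max 0 (q (i + 1) - r * q i) := by
  have hexcess : 0 ≤ q' (i + 1) - q (i + 1) := sub_nonneg.mpr (h.le (by lia) hin)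
  rw [h.mul_sub_eq_max hr hmi hin]
  refine max_le (add_nonneg hexcess (le_max_left _ _)) ?_
  linarith [le_max_right 0 (q (i + 1) - r * q i)]

theorem mul_sum_sub_le (h : IsUpperEnvelope (1 + α) q q' m n) (hmn : m ≤ n) (hα : -1 < α) :
    α * ∑ i ∈ Icc m n, (q' i - q i) ≤
      ∑ i ∈ Icc (m + 1) n, max 0 (q i - (1 + α) * q (i - 1)) := by
  have hincrement : ∀ i ∈ Ico m n, α * (q' i - q i) ≤
      (q' (i + 1) - q (i + 1)) - (q' i - q i) +
        max 0 (q (i + 1) - (1 + α) * q (i + 1 - 1)) := by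
    intro i hi
    obtain ⟨hmi, hin⟩ := mem_Ico.mp hi
    rw [Nat.add_sub_cancel]
    linarith [h.mul_sub_le (neg_lt_iff_pos_add'.mp hα) hmi hin]
  have hright : q' n - q n = 0 := sub_eq_zero.mpr (h.eq_right hmn)
  calc
    α * ∑ i ∈ Icc m n, (q' i - q i) = ∑ i ∈ Ico m n, α * (q' i - q i) := by
      rw [← Ico_add_one_right_eq_Icc, sum_Ico_succ_top hmn, hright, add_zero, mul_sum]
    _ ≤ (q' n - q n) - (q' m - q m) +
          ∑ i ∈ Icc (m + 1) n, max 0 (q i - (1 + α) * q (i - 1)) :=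
      sum_Ico_le_sub_add_sum_Icc (d := fun i => q' i - q i)
        (b := fun i => max 0 (q i - (1 + α) * q (i - 1))) hmn hincrement
    _ ≤ ∑ i ∈ Icc (m + 1) n, max 0 (q i - (1 + α) * q (i - 1)) := by
      linarith [h.le le_rfl hmn]

end IsUpperEnvelope

theorem upper_envelope_properties_general [IsStrictOrderedRing K] {α : K} {q q' : ℕ → K}
    {m n : ℕ} (hmn : m ≤ n) (hα : -1 < α) (h : IsUpperEnvelope (1 + α) q q' m n) :
    (∀ i ∈ Icc m n, q i ≤ q' i) ∧
    (∀ i, m + 1 ≤ i → i ≤ n → q' i ≤ (1 + α) * q' (i - 1)) ∧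
    α * ∑ i ∈ Icc m n, (q' i - q i) ≤
      ∑ i ∈ Icc (m + 1) n, max 0 (q i - (1 + α) * q (i - 1)) := by
  refine ⟨fun i hi => ?_, fun i hmi hin => ?_, h.mul_sum_sub_le hmn hα⟩
  · exact h.le (mem_Icc.mp hi).1 (mem_Icc.mp hi).2
  · obtain ⟨j, rfl⟩ := Nat.exists_eq_add_of_le' (Nat.one_le_of_lt hmi)
    exact h.succ_le_mul (neg_lt_iff_pos_add'.mp hα) (Nat.le_of_lt_succ hmi) hin

end

/-- For nonnegative reals `q_1, …, q_ℓ` and `q'_i = max_{i ≤ s ≤ ℓ} q_s/(1+α)^(s−i)`: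
(i) `q_i ≤ q'_i`; (ii) `q'_i ≤ (1+α)·q'_{i−1}` for `2 ≤ i ≤ ℓ`; and
(iii) `α·Σ_{i=1}^ℓ (q'_i − q_i) ≤ Σ_{i=2}^ℓ max(0, q_i − (1+α)·q_{i−1})`. -/
theorem upper_envelope_properties
    (ℓ : ℕ) (hℓ : 1 ≤ ℓ) (α : ℝ) (hα : 0 < α)
    (q q' : ℕ → ℝ) (hq0 : ∀ i ∈ Icc 1 ℓ, 0 ≤ q i)
    (hq' : ∀ i, ∀ (_ : 1 ≤ i) (h2 : i ≤ ℓ),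
      q' i = (Icc i ℓ).sup' (Finset.nonempty_Icc.mpr h2)
        (fun s => q s / (1 + α) ^ (s - i))) :
    (∀ i ∈ Icc 1 ℓ, q i ≤ q' i) ∧
    (∀ i, 2 ≤ i → i ≤ ℓ → q' i ≤ (1 + α) * q' (i - 1)) ∧
    α * ∑ i ∈ Icc 1 ℓ, (q' i - q i) ≤ ∑ i ∈ Icc 2 ℓ, max 0 (q i - (1 + α) * q (i - 1)) :=
  upper_envelope_properties_general hℓ (neg_one_lt_zero.trans hα) hq'
end

section
/- Let α > 0, let ℓ ≥ 1, let Q be a distribution over [ℓ] with q_i = Q(i), and let q'_1, …, q'_ℓ be reals with q_i ≤ q'_i for all i and q'_i ≤ (1+α)·q'_{i−1} for all 2 ≤ i ≤ ℓ; set ρ = Σ_{i=1}^ℓ (q'_i − q_i). Then there exists a distribution Q'' over [ℓ] satisfying the exponential property with parameter α such that d_TV(Q, Q'') ≤ ρ. -/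
open Finset

/-!
Normalise `q'`. Its total mass is `S = 1 + ρ ≥ 1`, and dividing by `S` keeps the exponential
property because that property is homogeneous. Since `Q ≤ q'`, the excess of `Q` over `q' / S` is
at most `(1 - 1 / S) Q` pointwise, so the distance is at most `1 - 1 / S = ρ / (1 + ρ) ≤ ρ`.
-/

section General

variable {ι K : Type*} [Field K] [LinearOrder K]

/-- The total variation distance between weights `p` and `q` on the finite set `s`; the values of
`p` and `q` outside `s` are ignored. -/
def tvDist (s : Finset ι) (p q : ι → K) : K :=
  (1 / 2) * ∑ i ∈ s, |p i - q i|

/-- The exponential property along a relation `r`: the weight grows by a factor of at most `c`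
along each related pair. On `[ℓ]` one takes `c = 1 + α` and relates `k` to `k + 1`. -/
def IsExponential (r : ι → ι → Prop) (c : K) (q : ι → K) : Prop :=
  ∀ ⦃i j⦄, r i j → q j ≤ c * q i

variable [IsStrictOrderedRing K] {s : Finset ι} {r : ι → ι → Prop} {c : K} {p q : ι → K}

theorem IsExponential.div_const (hq : IsExponential r c q) {a : K} (ha : 0 ≤ a) :
    IsExponential r c fun i => q i / a := by
  intro i j hij
  rw [← mul_div_assoc]
  exact div_le_div_of_nonneg_right (hq hij) ha

theorem tvDist_eq_sum_posPart (h : ∑ i ∈ s, p i = ∑ i ∈ s, q i) :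
    tvDist s p q = ∑ i ∈ s, (p i - q i)⁺ := by
  have hsum : ∑ i ∈ s, (p i - q i) = 0 := by rw [sum_sub_distrib, h, sub_self]
  calc tvDist s p q
      = (1 / 2) * ∑ i ∈ s, (|p i - q i| + (p i - q i)) := by
        rw [tvDist, sum_add_distrib, hsum, add_zero]
    _ = ∑ i ∈ s, (p i - q i)⁺ := by
        simp_rw [abs_add_eq_two_nsmul_posPart, ← smul_sum, nsmul_eq_mul]
        ring

theorem tvDist_div_sum_le_one_sub (hp : ∀ i ∈ s, 0 ≤ p i) (hp_pos : 0 < ∑ i ∈ s, p i)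
    (hpq : ∀ i ∈ s, p i ≤ q i) :
    tvDist s (fun i => p i / ∑ j ∈ s, p j) (fun i => q i / ∑ j ∈ s, q j) ≤
      1 - (∑ i ∈ s, p i) / ∑ i ∈ s, q i := by
  have hle : ∑ i ∈ s, p i ≤ ∑ i ∈ s, q i := sum_le_sum hpq
  set P := ∑ i ∈ s, p i with hP
  set S := ∑ i ∈ s, q i with hS
  have hS_pos : 0 < S := hp_pos.trans_le hle
  have hexcess : ∀ i ∈ s, (p i / P - q i / S)⁺ ≤ p i / P - p i / S := fun i hi =>
    sup_le (sub_le_sub_left (div_le_div_of_nonneg_right (hpq i hi) hS_pos.le) _)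
      (sub_nonneg.2 (div_le_div_of_nonneg_left (hp i hi) hp_pos hle))
  have hp_sum : ∑ i ∈ s, p i / P = 1 := by rw [← sum_div, ← hP, div_self hp_pos.ne']
  have hq_sum : ∑ i ∈ s, q i / S = 1 := by rw [← sum_div, ← hS, div_self hS_pos.ne']
  calc tvDist s (fun i => p i / P) (fun i => q i / S)
      = ∑ i ∈ s, (p i / P - q i / S)⁺ := tvDist_eq_sum_posPart (hp_sum.trans hq_sum.symm)
    _ ≤ ∑ i ∈ s, (p i / P - p i / S) := sum_le_sum hexcess
    _ = 1 - P / S := by rw [sum_sub_distrib, hp_sum, ← sum_div]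

theorem exists_exponential_close_general (hp : ∀ i ∈ s, 0 ≤ p i) (hp_sum : ∑ i ∈ s, p i = 1)
    (hpq : ∀ i ∈ s, p i ≤ q i) (hq : IsExponential r c q) :
    ∃ p' : ι → K, (∀ i ∈ s, 0 ≤ p' i) ∧ ∑ i ∈ s, p' i = 1 ∧ IsExponential r c p' ∧
      tvDist s p p' ≤ (∑ i ∈ s, (q i - p i)) / (1 + ∑ i ∈ s, (q i - p i)) := by
  have hmass : 1 + ∑ i ∈ s, (q i - p i) = ∑ i ∈ s, q i := by
    rw [sum_sub_distrib, hp_sum, add_sub_cancel]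
  have hS_pos : 0 < ∑ i ∈ s, q i := by
    linarith [sum_le_sum hpq]
  refine ⟨fun i => q i / ∑ j ∈ s, q j,
    fun i hi => div_nonneg ((hp i hi).trans (hpq i hi)) hS_pos.le,
    by rw [← sum_div, div_self hS_pos.ne'], hq.div_const hS_pos.le, ?_⟩
  calc tvDist s p (fun i => q i / ∑ j ∈ s, q j)
      ≤ 1 - 1 / ∑ i ∈ s, q i := by
        simpa only [hp_sum, div_one] using
          tvDist_div_sum_le_one_sub hp (hp_sum ▸ one_pos) hpq
    _ = (∑ i ∈ s, (q i - p i)) / (1 + ∑ i ∈ s, (q i - p i)) := by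
        rw [hmass, one_sub_div hS_pos.ne', sum_sub_distrib, hp_sum]

end General

/-- If `Q` is a distribution over `[ℓ]` dominated by a sequence `q'` which satisfies the
exponential property with parameter `α`, and `ρ = Σ (q'_i − q_i)`, then there is a
distribution `Q''` over `[ℓ]` satisfying the exponential property with
`d_TV(Q, Q'') ≤ ρ`. -/
theorem exists_exponential_close
    (ℓ : ℕ) (hℓ : 1 ≤ ℓ) (α : ℝ) (hα : 0 < α)
    (Q : ℕ → ℝ) (hQ0 : ∀ i ∈ Icc 1 ℓ, 0 ≤ Q i) (hQ1 : ∑ i ∈ Icc 1 ℓ, Q i = 1)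
    (q' : ℕ → ℝ) (hdom : ∀ i ∈ Icc 1 ℓ, Q i ≤ q' i)
    (hexp : ∀ i, 2 ≤ i → i ≤ ℓ → q' i ≤ (1 + α) * q' (i - 1))
    (ρ : ℝ) (hρ : ρ = ∑ i ∈ Icc 1 ℓ, (q' i - Q i)) :
    ∃ Q'' : ℕ → ℝ, (∀ i ∈ Icc 1 ℓ, 0 ≤ Q'' i) ∧ (∑ i ∈ Icc 1 ℓ, Q'' i = 1) ∧
      (∀ k, 1 ≤ k → k + 1 ≤ ℓ → Q'' (k + 1) ≤ (1 + α) * Q'' k) ∧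
      (1 / 2) * ∑ i ∈ Icc 1 ℓ, |Q i - Q'' i| ≤ ρ := by
  have hexp_succ : IsExponential (fun k k' => 1 ≤ k ∧ k' ≤ ℓ ∧ k' = k + 1) (1 + α) q' := by
    rintro k _ ⟨hk, hkℓ, rfl⟩
    exact hexp (k + 1) (Nat.succ_le_succ hk) hkℓ
  obtain ⟨Q'', hQ''0, hQ''1, hQ''exp, hQ''close⟩ :=
    exists_exponential_close_general hQ0 hQ1 hdom hexp_succ
  have hρ0 : 0 ≤ ρ := hρ ▸ sum_nonneg fun i hi => sub_nonneg.2 (hdom i hi)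
  rw [← hρ] at hQ''close
  exact ⟨Q'', hQ''0, hQ''1, fun k hk hkℓ => hQ''exp ⟨hk, hkℓ, rfl⟩,
    hQ''close.trans (div_le_self hρ0 (le_add_of_nonneg_right hρ0))⟩
end

section
/- Let X be a random variable on a probability space with 0 ≤ X ≤ 1 almost surely, and suppose E[X] ≥ ε for some 0 < ε ≤ 1. Then there exist nonnegative integers a and b such that 2^{−a} ≥ ε/8, 2^{−a}·2^{−b} ≥ ε/(8·⌈log₂(4/ε)⌉), and P(X ≥ 2^{−a}) ≥ 2^{−b}. -/
open MeasureTheory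

/-! Bound `X` by its dyadic layers: up to an error of at most `2^(-n)`, it is at most the sum over
`1 ≤ a ≤ n` of `2^(-a)` times the indicator of `X ≥ 2^(-a)`. For `n = ⌈log₂(4/ε)⌉` the error is at
most `ε/4`, so the expected layers sum to at least `3ε/4` and one of them, `2^(-a) P(X ≥ 2^(-a))`,
is at least `ε/(4n)`. Rounding its probability down to a power of `1/2` costs a factor of at most
`2`. Moreover `2^n < 8/ε`, as the ceiling adds less than one, whence `2^(-a) ≥ ε/8`. -/

section Layering

lemma le_add_sum_range_layers {α : Type*} [AddCommGroup α] [LinearOrder α] [IsOrderedAddMonoid α]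
    {t : ℕ → α} (ht : Antitone t) {x : α} (hx : x ≤ t 0) (n : ℕ) :
    x ≤ t n + ∑ k ∈ Finset.range n, if t (k + 1) ≤ x then t k - t (k + 1) else 0 := by
  induction n with
  | zero => simpa using hx
  | succ n ih =>
    by_cases hxn : t (n + 1) ≤ x
    · rwa [Finset.sum_range_succ, if_pos hxn, add_left_comm, add_sub_cancel, add_comm]
    · have layers_nonneg : 0 ≤ ∑ k ∈ Finset.range (n + 1),
          if t (k + 1) ≤ x then t k - t (k + 1) else 0 :=
        Finset.sum_nonneg fun k _ => by
          split_ifs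
          exacts [sub_nonneg.2 (ht k.le_succ), le_rfl]
      exact (not_le.1 hxn).le.trans (le_add_of_nonneg_right layers_nonneg)

variable {Ω : Type*} [MeasurableSpace Ω] {μ : Measure Ω} [IsFiniteMeasure μ] {X : Ω → ℝ}
  {t : ℕ → ℝ}

lemma integral_le_add_sum_range_layers (hX : Integrable X μ) (ht : Antitone t)
    (hXt : ∀ᵐ ω ∂μ, X ω ≤ t 0) (n : ℕ) :
    ∫ ω, X ω ∂μ ≤ μ.real Set.univ * t n +
      ∑ k ∈ Finset.range n, μ.real {ω | t (k + 1) ≤ X ω} * (t k - t (k + 1)) := by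
  let layer (k : ℕ) : Ω → ℝ := {ω | t (k + 1) ≤ X ω}.indicator fun _ => t k - t (k + 1)
  have level_meas (k : ℕ) : NullMeasurableSet {ω | t (k + 1) ≤ X ω} μ :=
    nullMeasurableSet_le aemeasurable_const hX.aemeasurable
  have layer_int (k : ℕ) : Integrable (layer k) μ :=
    (integrable_const _).indicator₀ (level_meas k)
  have layers_int : Integrable (fun ω => ∑ k ∈ Finset.range n, layer k ω) μ :=
    integrable_finsetSum _ fun k _ => layer_int k
  calc ∫ ω, X ω ∂μ ≤ ∫ ω, t n + ∑ k ∈ Finset.range n, layer k ω ∂μ := by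
        refine integral_mono_ae hX ((integrable_const _).add layers_int) ?_
        filter_upwards [hXt] with ω hω
        simpa [layer, Set.indicator_apply] using le_add_sum_range_layers ht hω n
    _ = μ.real Set.univ * t n + ∑ k ∈ Finset.range n, ∫ ω, layer k ω ∂μ := by
        rw [integral_add (integrable_const _) layers_int, integral_const, smul_eq_mul,
          integral_finsetSum _ fun k _ => layer_int k]
    _ = _ := by
        congr! with k
        rw [integral_indicator₀ (level_meas k), setIntegral_const, smul_eq_mul]

lemma exists_layer_ge_average (hX : Integrable X μ) (ht : Antitone t)
    (hXt : ∀ᵐ ω ∂μ, X ω ≤ t 0) {n : ℕ} (hn : n ≠ 0) :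
    ∃ k < n, (∫ ω, X ω ∂μ - μ.real Set.univ * t n) / n ≤
      μ.real {ω | t (k + 1) ≤ X ω} * (t k - t (k + 1)) := by
  simp only [← Finset.mem_range]
  refine Finset.exists_le_of_sum_le (Finset.nonempty_range_iff.2 hn) ?_
  rw [Finset.sum_const, Finset.card_range, nsmul_eq_mul, mul_div_cancel₀ _ (by positivity),
    sub_le_iff_le_add']
  exact integral_le_add_sum_range_layers hX ht hXt n

lemma exists_half_pow_level_ge_average (hX : Integrable X μ) (hX1 : ∀ᵐ ω ∂μ, X ω ≤ 1)
    {n : ℕ} (hn : n ≠ 0) :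
    ∃ a ≤ n, (∫ ω, X ω ∂μ - μ.real Set.univ * (1 / 2) ^ n) / n ≤
      (1 / 2 : ℝ) ^ a * μ.real {ω | (1 / 2 : ℝ) ^ a ≤ X ω} := by
  have half_pow_anti : Antitone fun k : ℕ => (1 / 2 : ℝ) ^ k :=
    pow_right_anti₀ (by norm_num) (by norm_num)
  obtain ⟨k, hkn, hk⟩ := exists_layer_ge_average hX half_pow_anti (by simpa using hX1) hn
  have layer_height : (1 / 2 : ℝ) ^ k - (1 / 2) ^ (k + 1) = (1 / 2) ^ (k + 1) := by ring
  rw [layer_height] at hk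
  exact ⟨k + 1, hkn, hk.trans_eq (mul_comm _ _)⟩

lemma integral_le_measureReal_univ (hX : Integrable X μ) (hX1 : ∀ᵐ ω ∂μ, X ω ≤ 1) :
    ∫ ω, X ω ∂μ ≤ μ.real Set.univ := by
  simpa using integral_mono_ae hX (integrable_const 1) hX1

end Layering

section CeilLogb

variable {b x : ℝ}

lemma one_div_pow_natCeil_logb_le (hb : 1 < b) (hx : 0 < x) :
    (1 / b) ^ ⌈Real.logb b x⌉₊ ≤ 1 / x := by
  rw [one_div_pow]
  refine one_div_le_one_div_of_le hx ?_
  rw [← Real.rpow_natCast, ← Real.logb_le_iff_le_rpow hb hx]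
  exact Nat.le_ceil _

lemma one_div_mul_lt_one_div_pow_natCeil_logb (hb : 1 < b) (hx : 1 ≤ x) :
    1 / (b * x) < (1 / b) ^ ⌈Real.logb b x⌉₊ := by
  have hb0 : 0 < b := one_pos.trans hb
  have hx0 : 0 < x := one_pos.trans_le hx
  rw [one_div_pow]
  refine one_div_lt_one_div_of_lt (by positivity) ?_
  rw [← Real.rpow_natCast, ← Real.lt_logb_iff_rpow_lt hb (mul_pos hb0 hx0),
    Real.logb_mul hb0.ne' hx0.ne', Real.logb_self_eq_one hb, add_comm]
  exact Nat.ceil_lt_add_one (Real.logb_nonneg hb hx)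

end CeilLogb

lemma exists_pow_le_and_mul_le_mul_pow {𝕜 : Type*} [Field 𝕜] [LinearOrder 𝕜]
    [IsStrictOrderedRing 𝕜] [Archimedean 𝕜] {y p q c : 𝕜} (hy0 : 0 < y) (hy1 : y < 1) (hp1 : p ≤ 1)
    (hq : 0 ≤ q) (hc : 0 < c) (hcqp : c ≤ q * p) : ∃ b : ℕ, y ^ b ≤ p ∧ y * c ≤ q * y ^ b := by
  have hp0 : 0 < p := pos_of_mul_pos_right (hc.trans_le hcqp) hq
  obtain ⟨b, hlt, hle⟩ := exists_nat_pow_near_of_lt_one hp0 hp1 hy0 hy1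
  refine ⟨b + 1, hlt.le, ?_⟩
  calc y * c ≤ y * (q * y ^ b) := by gcongr; exact hcqp.trans (by gcongr)
    _ = q * y ^ (b + 1) := by ring

theorem exists_level_of_expectation_ge_general
    {Ω : Type*} [MeasurableSpace Ω] {μ : Measure Ω} [IsFiniteMeasure μ]
    (hμ : μ.real Set.univ ≤ 1) {X : Ω → ℝ} (hX : Integrable X μ) (hX1 : ∀ᵐ ω ∂μ, X ω ≤ 1)
    {ε : ℝ} (hε0 : 0 < ε) (hE : ε ≤ ∫ ω, X ω ∂μ) :
    ∃ a b : ℕ, ε / 8 ≤ (1 / 2 : ℝ) ^ a ∧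
      ε / (8 * (⌈Real.logb 2 (4 / ε)⌉ : ℝ)) ≤ (1 / 2 : ℝ) ^ a * (1 / 2 : ℝ) ^ b ∧
      (1 / 2 : ℝ) ^ b ≤ μ.real {ω | (1 / 2 : ℝ) ^ a ≤ X ω} := by
  have one_lt : 1 < 4 / ε := by
    rw [one_lt_div hε0]
    linarith [integral_le_measureReal_univ hX hX1]
  have logb_pos : 0 < Real.logb 2 (4 / ε) := Real.logb_pos one_lt_two one_lt
  rw [← natCast_ceil_eq_intCast_ceil logb_pos.le]
  have half_pow_le := one_div_pow_natCeil_logb_le one_lt_two (one_pos.trans one_lt)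
  have lt_half_pow := one_div_mul_lt_one_div_pow_natCeil_logb one_lt_two one_lt.le
  have n_pos := Nat.ceil_pos.2 logb_pos
  set n := ⌈Real.logb 2 (4 / ε)⌉₊
  obtain ⟨a, han, ha⟩ := exists_half_pow_level_ge_average hX hX1 n_pos.ne'
  have tail_le : μ.real Set.univ * (1 / 2) ^ n ≤ ε / 4 :=
    (mul_le_of_le_one_left (by positivity) hμ).trans (half_pow_le.trans_eq (one_div_div 4 ε))
  have level_ge : ε / (4 * n) ≤ (1 / 2) ^ a * μ.real {ω | (1 / 2 : ℝ) ^ a ≤ X ω} := by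
    rw [← div_div]
    refine le_trans ?_ ha
    gcongr
    linarith
  obtain ⟨b, hbp, hb⟩ := exists_pow_le_and_mul_le_mul_pow one_half_pos one_half_lt_one
    ((measureReal_mono (Set.subset_univ _)).trans hμ) (by positivity) (by positivity) level_ge
  refine ⟨a, b, ?_, ?_, hbp⟩
  · calc ε / 8 = 1 / (2 * (4 / ε)) := by field_simp; norm_num
      _ ≤ (1 / 2) ^ n := lt_half_pow.le
      _ ≤ (1 / 2) ^ a := pow_le_pow_of_le_one (by norm_num) (by norm_num) han
  · calc ε / (8 * n) = 1 / 2 * (ε / (4 * n)) := by ring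
      _ ≤ (1 / 2) ^ a * (1 / 2) ^ b := hb

/-- Reverse-Markov layering: if `0 ≤ X ≤ 1` a.s. and `E[X] ≥ ε`, then there are
nonnegative integers `a, b` with `2^(−a) ≥ ε/8`,
`2^(−a)·2^(−b) ≥ ε/(8·⌈log₂(4/ε)⌉)`, and `P(X ≥ 2^(−a)) ≥ 2^(−b)`. -/
theorem exists_level_of_expectation_ge
    {Ω : Type*} [MeasurableSpace Ω] (μ : Measure Ω) [IsProbabilityMeasure μ]
    (X : Ω → ℝ) (hX : Measurable X)
    (hbdd : ∀ᵐ ω ∂μ, X ω ∈ Set.Icc (0 : ℝ) 1)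
    (ε : ℝ) (hε0 : 0 < ε) (hε1 : ε ≤ 1)
    (hE : ε ≤ ∫ ω, X ω ∂μ) :
    ∃ a b : ℕ, ε / 8 ≤ (1 / 2 : ℝ) ^ a ∧
      ε / (8 * (⌈Real.logb 2 (4 / ε)⌉ : ℝ)) ≤ (1 / 2 : ℝ) ^ a * (1 / 2 : ℝ) ^ b ∧
      (1 / 2 : ℝ) ^ b ≤ (μ {ω | (1 / 2 : ℝ) ^ a ≤ X ω}).toReal :=
  exists_level_of_expectation_ge_general measureReal_le_one (.of_mem_Icc 0 1 hX.aemeasurable hbdd)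
    (hbdd.mono fun _ hω => hω.2) hε0 hE
end

section
/- Let m ≥ 1, let P and P* be distributions over [m] with 1/(2m) ≤ P*(i) ≤ 2/m for all i ∈ [m], and suppose d_TV(P, P*) ≥ ε. Then (1/m)·Σ_{i=1}^m Σ_{j=1}^m P(i)·|P(i)/(P(i)+P(j)) − P*(i)/(P*(i)+P*(j))| ≥ ε/16, where a summand with P(i)+P(j) = 0 is interpreted as 0 (note such a summand has weight P(i) = 0). Equivalently, if i is drawn from P and j is drawn uniformly from [m], then E|P(i)/(P(i)+P(j)) − P*(i)/(P*(i)+P*(j))| ≥ ε/16. -/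
open Finset

/-!
For a pair `i, j`, the comparison probabilities of `P` and `Q` differ by the cross term
`P i * Q j - P j * Q i` divided by `(P i + P j) * (Q i + Q j)`. Adding the contributions of the
ordered pairs `(i, j)` and `(j, i)` cancels `P i + P j`, so the discrepancy summed over all pairs
is the sum of the `|P i * Q j - P j * Q i|` up to the factors `Q i + Q j`, which an upper bound on
`Q` controls. Since `P` and `Q` both have total mass `1`, summing the signed cross terms over `j`
gives back `P i - Q i`.
-/

section

variable {ι 𝕜 : Type*}

lemma sum_sum_add_swap {M : Type*} [AddCommMonoid M] (s : Finset ι) (f : ι → ι → M) :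
    ∑ i ∈ s, ∑ j ∈ s, (f i j + f j i) = 2 • ∑ i ∈ s, ∑ j ∈ s, f i j := by
  simp only [sum_add_distrib]
  rw [sum_comm (f := fun i j ↦ f j i), two_nsmul]

lemma sum_abs_sub_le_sum_sum_abs_cross [CommRing 𝕜] [LinearOrder 𝕜] [IsOrderedRing 𝕜]
    {s : Finset ι} {P Q : ι → 𝕜} (hP : ∑ i ∈ s, P i = 1) (hQ : ∑ i ∈ s, Q i = 1) :
    ∑ i ∈ s, |P i - Q i| ≤ ∑ i ∈ s, ∑ j ∈ s, |P i * Q j - P j * Q i| := by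
  refine sum_le_sum fun i _ ↦ ?_
  have sum_cross : ∑ j ∈ s, (P i * Q j - P j * Q i) = P i - Q i := by
    rw [sum_sub_distrib, ← mul_sum, ← sum_mul, hP, hQ, mul_one, one_mul]
  exact sum_cross ▸ abs_sum_le_sum_abs _ _

variable [Field 𝕜] [LinearOrder 𝕜] [IsStrictOrderedRing 𝕜]

-- If `p + r` or `a + b` is zero, both sides vanish whatever value is given to the quotients.
lemma add_mul_weighted_abs_div_sub_div {p r a b : 𝕜}
    (hp : 0 ≤ p) (hr : 0 ≤ r) (ha : 0 ≤ a) (hb : 0 ≤ b) :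
    (a + b) * (p * |p / (p + r) - a / (a + b)| + r * |r / (r + p) - b / (b + a)|) =
      |p * b - r * a| := by
  rcases (add_nonneg hp hr).eq_or_lt' with hpr | hpr
  · obtain ⟨rfl, rfl⟩ := (add_eq_zero_iff_of_nonneg hp hr).1 hpr
    simp
  rcases (add_nonneg ha hb).eq_or_lt' with hab | hab
  · obtain ⟨rfl, rfl⟩ := (add_eq_zero_iff_of_nonneg ha hb).1 hab
    simp
  have diff_left : p / (p + r) - a / (a + b) = (p * b - r * a) / ((p + r) * (a + b)) := by
    rw [div_sub_div _ _ hpr.ne' hab.ne']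
    ring
  have diff_right : r / (r + p) - b / (b + a) = -((p * b - r * a) / ((p + r) * (a + b))) := by
    rw [add_comm r p, add_comm b a, div_sub_div _ _ hpr.ne' hab.ne']
    ring
  rw [diff_left, diff_right, abs_neg, abs_div, abs_of_pos (mul_pos hpr hab)]
  field_simp

theorem expected_pair_discrepancy_ge_general {s : Finset ι} {P Q : ι → 𝕜} {c : 𝕜}
    (hP0 : ∀ i ∈ s, 0 ≤ P i) (hP1 : ∑ i ∈ s, P i = 1)
    (hQ0 : ∀ i ∈ s, 0 ≤ Q i) (hQ1 : ∑ i ∈ s, Q i = 1) (hQc : ∀ i ∈ s, Q i ≤ c) :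
    (1 / 2) * ∑ i ∈ s, |P i - Q i| ≤
      2 * c * ∑ i ∈ s, ∑ j ∈ s, P i * |P i / (P i + P j) - Q i / (Q i + Q j)| := by
  let d (i j : ι) : 𝕜 := P i * |P i / (P i + P j) - Q i / (Q i + Q j)|
  have d_nonneg {i : ι} (hi : i ∈ s) (j : ι) : 0 ≤ d i j := mul_nonneg (hP0 i hi) (abs_nonneg _)
  have cross_le {i j : ι} (hi : i ∈ s) (hj : j ∈ s) :
      |P i * Q j - P j * Q i| ≤ 2 * c * (d i j + d j i) := by
    rw [← add_mul_weighted_abs_div_sub_div (hP0 i hi) (hP0 j hj) (hQ0 i hi) (hQ0 j hj)]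
    refine mul_le_mul_of_nonneg_right ?_ (add_nonneg (d_nonneg hi j) (d_nonneg hj i))
    linarith [hQc i hi, hQc j hj]
  calc (1 / 2) * ∑ i ∈ s, |P i - Q i|
      ≤ (1 / 2) * ∑ i ∈ s, ∑ j ∈ s, |P i * Q j - P j * Q i| := by
        gcongr (1 / 2) * ?_
        exact sum_abs_sub_le_sum_sum_abs_cross hP1 hQ1
    _ ≤ (1 / 2) * ∑ i ∈ s, ∑ j ∈ s, 2 * c * (d i j + d j i) := by
        gcongr with i hi j hj
        exact cross_le hi hj
    _ = 2 * c * ∑ i ∈ s, ∑ j ∈ s, d i j := by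
        simp only [← mul_sum, sum_sum_add_swap, nsmul_eq_mul, Nat.cast_ofNat]
        ring

end

/-- If `P*` has all probabilities in `[1/(2m), 2/m]` and `d_TV(P, P*) ≥ ε`, then for
`i ~ P` and `j` uniform on `[m]`,
`E|P(i)/(P(i)+P(j)) − P*(i)/(P*(i)+P*(j))| ≥ ε/16` (division by zero taken as `0`). -/
theorem expected_pair_discrepancy_ge
    (m : ℕ) (hm : 1 ≤ m) (ε : ℝ) (P Ps : ℕ → ℝ)
    (hP0 : ∀ i ∈ Icc 1 m, 0 ≤ P i) (hP1 : ∑ i ∈ Icc 1 m, P i = 1)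
    (hPs0 : ∀ i ∈ Icc 1 m, 0 ≤ Ps i) (hPs1 : ∑ i ∈ Icc 1 m, Ps i = 1)
    (hlow : ∀ i ∈ Icc 1 m, 1 / (2 * m) ≤ Ps i) (hhigh : ∀ i ∈ Icc 1 m, Ps i ≤ 2 / m)
    (hfar : ε ≤ (1 / 2) * ∑ i ∈ Icc 1 m, |P i - Ps i|) :
    ε / 16 ≤ (1 / (m : ℝ)) * ∑ i ∈ Icc 1 m, ∑ j ∈ Icc 1 m,
      P i * |P i / (P i + P j) - Ps i / (Ps i + Ps j)| := by
  have tv_le := expected_pair_discrepancy_ge_general hP0 hP1 hPs0 hPs1 hhigh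
  have tv_nonneg : 0 ≤ ∑ i ∈ Icc 1 m, |P i - Ps i| := sum_nonneg fun _ _ ↦ abs_nonneg _
  linear_combination (1 / 16) * hfar + (1 / 4) * tv_le + (3 / 32) * tv_nonneg
end

section
/- Let m ≥ 1, let P and P* be distributions over [m] with 0 < P*(i) ≤ 2/m for all i ∈ [m], and suppose Σ_{i=1}^m |P(i) − P*(i)| ≥ 2ε. Writing r_i = P(i)/P*(i), we have Σ_{i=1}^m Σ_{j=1}^m |r_i − r_j| ≥ ε·m²/2. -/
open Finset

/-! Since `∑ P = ∑ Q = 1`, summing `P i * Q j - Q i * P j = Q i * Q j * (P i / Q i - P j / Q j)`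
over `j` writes each deviation `P i - Q i` as a weighted sum of differences of ratios, and the upper
bound on `Q` controls the weights `Q i * Q j`. -/

section RatioDifferences

variable {ι K : Type*} [Field K] {s : Finset ι} {P Q : ι → K}

theorem sum_mul_mul_div_sub_div {i : ι} (hi : i ∈ s) (hQ : ∀ j ∈ s, Q j ≠ 0) :
    ∑ j ∈ s, Q i * Q j * (P i / Q i - P j / Q j) = P i * ∑ j ∈ s, Q j - Q i * ∑ j ∈ s, P j := by
  simp only [mul_sum, ← sum_sub_distrib]
  refine sum_congr rfl fun j hj ↦ ?_
  have hi0 := hQ i hi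
  have hj0 := hQ j hj
  field_simp

variable [LinearOrder K] [IsStrictOrderedRing K]

theorem sum_abs_mul_sum_sub_mul_sum_le {c : K} (hQ : ∀ i ∈ s, Q i ≠ 0) (hc : ∀ i ∈ s, |Q i| ≤ c) :
    ∑ i ∈ s, |P i * ∑ j ∈ s, Q j - Q i * ∑ j ∈ s, P j| ≤
      c ^ 2 * ∑ i ∈ s, ∑ j ∈ s, |P i / Q i - P j / Q j| := by
  simp only [mul_sum (a := c ^ 2)]
  refine sum_le_sum fun i hi ↦ ?_
  calc |P i * ∑ j ∈ s, Q j - Q i * ∑ j ∈ s, P j|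
      = |∑ j ∈ s, Q i * Q j * (P i / Q i - P j / Q j)| := by rw [sum_mul_mul_div_sub_div hi hQ]
    _ ≤ ∑ j ∈ s, |Q i * Q j * (P i / Q i - P j / Q j)| := abs_sum_le_sum_abs _ _
    _ = ∑ j ∈ s, |Q i| * |Q j| * |P i / Q i - P j / Q j| := by simp only [abs_mul]
    _ ≤ ∑ j ∈ s, c ^ 2 * |P i / Q i - P j / Q j| := by
      have hc0 : 0 ≤ c := (abs_nonneg _).trans (hc i hi)
      rw [sq]
      gcongr with j hj
      exacts [hc i hi, hc j hj]

theorem sum_abs_ratio_differences_ge_general {ε C : K}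
    (hP1 : ∑ i ∈ s, P i = 1) (hQ0 : ∀ i ∈ s, Q i ≠ 0) (hQ1 : ∑ i ∈ s, Q i = 1)
    (hhigh : ∀ i ∈ s, |Q i| ≤ C / #s) (hfar : 2 * ε ≤ ∑ i ∈ s, |P i - Q i|) :
    2 * ε * (#s : K) ^ 2 / C ^ 2 ≤ ∑ i ∈ s, ∑ j ∈ s, |P i / Q i - P j / Q j| := by
  have hs : s.Nonempty := nonempty_of_sum_ne_zero (hQ1.trans_ne one_ne_zero)
  have hcard : (0 : K) < #s := mod_cast hs.card_pos
  have hdist := sum_abs_mul_sum_sub_mul_sum_le (P := P) hQ0 hhigh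
  simp only [hP1, hQ1, mul_one] at hdist
  refine div_le_of_le_mul₀ (sq_nonneg C) (by positivity) ?_
  rw [← le_div_iff₀ (pow_pos hcard 2)]
  calc 2 * ε ≤ (C / #s) ^ 2 * ∑ i ∈ s, ∑ j ∈ s, |P i / Q i - P j / Q j| := hfar.trans hdist
    _ = (∑ i ∈ s, ∑ j ∈ s, |P i / Q i - P j / Q j|) * C ^ 2 / (#s : K) ^ 2 := by ring

end RatioDifferences

/-- If `0 < P*(i) ≤ 2/m` for all `i` and `Σ |P(i) − P*(i)| ≥ 2ε`, then with
`r_i = P(i)/P*(i)` we have `Σ_i Σ_j |r_i − r_j| ≥ ε·m²/2`. -/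
theorem sum_abs_ratio_differences_ge
    (m : ℕ) (hm : 1 ≤ m) (ε : ℝ) (P Ps : ℕ → ℝ)
    (hP0 : ∀ i ∈ Icc 1 m, 0 ≤ P i) (hP1 : ∑ i ∈ Icc 1 m, P i = 1)
    (hPs0 : ∀ i ∈ Icc 1 m, 0 < Ps i) (hPs1 : ∑ i ∈ Icc 1 m, Ps i = 1)
    (hhigh : ∀ i ∈ Icc 1 m, Ps i ≤ 2 / m)
    (hfar : 2 * ε ≤ ∑ i ∈ Icc 1 m, |P i - Ps i|) :
    ε * (m : ℝ) ^ 2 / 2 ≤ ∑ i ∈ Icc 1 m, ∑ j ∈ Icc 1 m, |P i / Ps i - P j / Ps j| := by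
  have hbound := sum_abs_ratio_differences_ge_general (C := 2) hP1 (fun i hi ↦ (hPs0 i hi).ne') hPs1
    (fun i hi ↦ by simpa [abs_of_pos (hPs0 i hi)] using hhigh i hi) hfar
  rw [Nat.card_Icc, add_tsub_cancel_right] at hbound
  linarith
end

section
/- Let 0 < ε ≤ 1, let D and D* be distributions over [N], and let K = ⌈log₂(10N/ε)⌉. For 1 ≤ k ≤ K define S_k = {i ∈ [N] : 2^{−k} < D*(i) ≤ 2^{1−k}}, and let S_{K+1} = [N] \ (S_1 ∪ … ∪ S_K). Assume: (a) (1/2)·Σ_{k=1}^{K+1} |D(S_k) − D*(S_k)| ≤ ε/10; and (b) if D(S_{K+1}) > 0 then D*(S_{K+1}) > 0. Define D' over [N] by D'(i) = D(S_k)·D*(i)/D*(S_k) for i ∈ S_k whenever D*(S_k) > 0, and D'(i) = 0 otherwise. Then Σ_{k=1}^{K+1} Σ_{i∈S_k} Σ_{j∈S_k} (D(i)/|S_k|)·|D(i)/(D(i)+D(j)) − D*(i)/(D*(i)+D*(j))| ≥ (1/16)·(d_TV(D', D) − 3ε/10), where any summand whose denominator vanishes is interpreted as 0. -/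
open Finset

/-! For a pair `i, j` in a bucket the two errors `|D i / (D i + D j) - D* i / (D* i + D* j)|` and
`|D j / (D i + D j) - D* j / (D* i + D* j)|` agree, so the contributions of `(i, j)` and `(j, i)`
add up to `|D i * D* j - D j * D* i| / ((D* i + D* j) * |S|)`, from which the denominator
`D i + D j` has disappeared. In a dyadic bucket `(D* i + D* j) * |S| ≤ 4 * D* S`, and summing over
`j` inside the absolute value leaves `|D i * D* S - D S * D* i| = D* S * |D i - D' i|`: the bucket
contributes at least an eighth of its `ℓ¹` distance between `D` and `D'`. The leftover elements
satisfy `D* i ≤ 2⁻ᴷ ≤ ε / (10 * N)`, so they have small mass under `D*`, hence under `D`, and there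
`D` and `D'` differ by at most `2 * D S` in `ℓ¹`. -/

section Bucket

variable {ι : Type*} {T : Finset ι} {D Ds : ι → ℝ}

/-- The expected error on a bucket `T`: for `i ~ D` restricted to `T` and `j` uniform in `T`, the
difference between the probabilities that `D` and `Ds`, conditioned on the pair `{i, j}`, give to
`i`. Summands with a vanishing denominator count as `0`. -/
noncomputable def pairDiscrepancy (T : Finset ι) (D Ds : ι → ℝ) : ℝ :=
  ∑ i ∈ T, ∑ j ∈ T,
    if D i + D j = 0 ∨ Ds i + Ds j = 0 then 0
    else (D i / (#T : ℝ)) * |D i / (D i + D j) - Ds i / (Ds i + Ds j)|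

/-- The function `D'` on a bucket `T`: the mass `D(T)` spread over `T` proportionally to `Ds`, and
`0` when `Ds` has no mass on `T`. -/
noncomputable def bucketFlattening (T : Finset ι) (D Ds : ι → ℝ) (i : ι) : ℝ :=
  if 0 < ∑ j ∈ T, Ds j then (∑ j ∈ T, D j) * Ds i / (∑ j ∈ T, Ds j) else 0

lemma pairDiscrepancy_nonneg (hD : ∀ i ∈ T, 0 ≤ D i) : 0 ≤ pairDiscrepancy T D Ds := by
  refine sum_nonneg fun i hi => sum_nonneg fun j _ => ?_
  have := hD i hi
  split_ifs <;> positivity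

lemma pair_error_add_swap {x y u v : ℝ} (m : ℝ) (hx : 0 ≤ x) (hy : 0 ≤ y) (hu : 0 < u)
    (hv : 0 < v) :
    x / m * |x / (x + y) - u / (u + v)| + y / m * |y / (y + x) - v / (v + u)| =
      |x * v - y * u| / ((u + v) * m) := by
  have huv : 0 < u + v := by positivity
  rcases (add_nonneg hx hy).eq_or_lt' with hxy | hxy
  · obtain ⟨rfl, rfl⟩ := (add_eq_zero_iff_of_nonneg hx hy).1 hxy
    simp
  have error : |x / (x + y) - u / (u + v)| = |x * v - y * u| / ((x + y) * (u + v)) := by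
    rw [div_sub_div _ _ hxy.ne' huv.ne', abs_div, abs_of_pos (mul_pos hxy huv)]
    congr 2
    ring
  have error_swap : |y / (y + x) - v / (v + u)| = |x / (x + y) - u / (u + v)| := by
    rw [add_comm y x, add_comm v u, ← abs_neg]
    congr 1
    field_simp
    ring
  rw [error_swap, error, ← add_mul, ← add_div]
  field_simp

lemma pairDiscrepancy_eq_of_pos (hD : ∀ i ∈ T, 0 ≤ D i) (hDs : ∀ i ∈ T, 0 < Ds i) :
    pairDiscrepancy T D Ds =
      ∑ i ∈ T, ∑ j ∈ T, D i / #T * |D i / (D i + D j) - Ds i / (Ds i + Ds j)| := by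
  refine sum_congr rfl fun i hi => sum_congr rfl fun j hj => ite_eq_right_iff.2 ?_
  rintro (h | h)
  · simp [((add_eq_zero_iff_of_nonneg (hD i hi) (hD j hj)).1 h).1]
  · exact absurd h (add_pos (hDs i hi) (hDs j hj)).ne'

lemma two_mul_pairDiscrepancy (hD : ∀ i ∈ T, 0 ≤ D i) (hDs : ∀ i ∈ T, 0 < Ds i) :
    2 * pairDiscrepancy T D Ds =
      ∑ i ∈ T, ∑ j ∈ T, |D i * Ds j - D j * Ds i| / ((Ds i + Ds j) * #T) := by
  rw [two_mul, pairDiscrepancy_eq_of_pos hD hDs]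
  nth_rw 2 [sum_comm]
  simp only [← sum_add_distrib]
  exact sum_congr rfl fun i hi => sum_congr rfl fun j hj =>
    pair_error_add_swap _ (hD i hi) (hD j hj) (hDs i hi) (hDs j hj)

lemma abs_bucketFlattening_sub (hT : 0 < ∑ j ∈ T, Ds j) (i : ι) :
    |bucketFlattening T D Ds i - D i| =
      |∑ j ∈ T, (D i * Ds j - D j * Ds i)| / ∑ j ∈ T, Ds j := by
  rw [bucketFlattening, if_pos hT, abs_sub_comm, sub_div' hT.ne', abs_div, abs_of_pos hT,
    sum_sub_distrib, mul_sum, sum_mul]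

lemma card_mul_le_mul_sum {c x : ℝ} (h : ∀ j ∈ T, x ≤ c * Ds j) :
    #T * x ≤ c * ∑ j ∈ T, Ds j := by
  rw [← nsmul_eq_mul, mul_sum]
  exact card_nsmul_le_sum T _ x h

lemma sum_abs_bucketFlattening_sub_le_mul_pairDiscrepancy {c : ℝ} (hD : ∀ i ∈ T, 0 ≤ D i)
    (hDs : ∀ i ∈ T, 0 < Ds i) (hc : ∀ i ∈ T, ∀ j ∈ T, Ds i ≤ c * Ds j) :
    ∑ i ∈ T, |bucketFlattening T D Ds i - D i| ≤ 4 * c * pairDiscrepancy T D Ds := by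
  have pointwise : ∀ i ∈ T, |bucketFlattening T D Ds i - D i| ≤
      2 * c * ∑ j ∈ T, |D i * Ds j - D j * Ds i| / ((Ds i + Ds j) * #T) := by
    intro i hi
    have hT : 0 < ∑ j ∈ T, Ds j := sum_pos hDs ⟨i, hi⟩
    have hcard : (0 : ℝ) < #T := by exact_mod_cast card_pos.2 ⟨i, hi⟩
    rw [abs_bucketFlattening_sub hT, mul_sum]
    refine (div_le_div_of_nonneg_right (abs_sum_le_sum_abs _ _) hT.le).trans ?_
    rw [sum_div]
    refine sum_le_sum fun j hj => ?_
    have denominator : (Ds i + Ds j) * #T ≤ 2 * c * ∑ j ∈ T, Ds j := by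
      linarith [card_mul_le_mul_sum (hc i hi), card_mul_le_mul_sum (hc j hj)]
    have hpos : 0 < (Ds i + Ds j) * #T := mul_pos (add_pos (hDs i hi) (hDs j hj)) hcard
    rw [← mul_div_assoc, div_le_div_iff₀ hT hpos]
    linarith [mul_le_mul_of_nonneg_left denominator (abs_nonneg (D i * Ds j - D j * Ds i))]
  calc ∑ i ∈ T, |bucketFlattening T D Ds i - D i|
      ≤ 2 * c * ∑ i ∈ T, ∑ j ∈ T, |D i * Ds j - D j * Ds i| / ((Ds i + Ds j) * #T) := by
        rw [mul_sum]
        exact sum_le_sum pointwise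
    _ = 4 * c * pairDiscrepancy T D Ds := by
        rw [← two_mul_pairDiscrepancy hD hDs]
        ring

lemma bucketFlattening_nonneg (hD : ∀ i ∈ T, 0 ≤ D i) {i : ι} (hi : 0 ≤ Ds i) :
    0 ≤ bucketFlattening T D Ds i := by
  have hDT := sum_nonneg hD
  rw [bucketFlattening]
  split_ifs <;> positivity

lemma sum_bucketFlattening_le (hD : ∀ i ∈ T, 0 ≤ D i) :
    ∑ i ∈ T, bucketFlattening T D Ds i ≤ ∑ i ∈ T, D i := by
  simp only [bucketFlattening]
  split_ifs with hT
  · rw [← sum_div, ← mul_sum, mul_div_cancel_right₀ _ hT.ne']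
  · simpa only [sum_const_zero] using sum_nonneg hD

lemma sum_abs_bucketFlattening_sub_le_two_mul_sum (hD : ∀ i ∈ T, 0 ≤ D i)
    (hDs : ∀ i ∈ T, 0 ≤ Ds i) :
    ∑ i ∈ T, |bucketFlattening T D Ds i - D i| ≤ 2 * ∑ i ∈ T, D i :=
  calc ∑ i ∈ T, |bucketFlattening T D Ds i - D i|
      ≤ ∑ i ∈ T, (bucketFlattening T D Ds i + D i) := by
        refine sum_le_sum fun i hi => (abs_sub _ _).trans_eq ?_
        rw [abs_of_nonneg (bucketFlattening_nonneg hD (hDs i hi)), abs_of_nonneg (hD i hi)]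
    _ ≤ 2 * ∑ i ∈ T, D i := by
        rw [sum_add_distrib, two_mul]
        exact add_le_add_left (sum_bucketFlattening_le hD) _

end Bucket

lemma sum_biUnion_le_of_nonneg {κ ι M : Type*} [DecidableEq ι] [AddCommMonoid M] [PartialOrder M]
    [IsOrderedAddMonoid M] (I : Finset κ) (S : κ → Finset ι) {f : ι → M}
    (hf : ∀ i, 0 ≤ f i) : ∑ i ∈ I.biUnion S, f i ≤ ∑ k ∈ I, ∑ i ∈ S k, f i := by
  rw [← sup_eq_biUnion]
  refine apply_sup_le_sum (f := fun T => ∑ i ∈ T, f i) sum_empty (fun {s t} => ?_) I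
  rw [sup_eq_union, ← sum_union_inter]
  exact le_add_of_nonneg_right (sum_nonneg fun i _ => hf i)

lemma le_half_pow_of_forall_not_dyadic {x : ℝ} {K : ℕ} (hx : x ≤ 1)
    (h : ∀ k ∈ Icc 1 K, ¬((1 / 2 : ℝ) ^ k < x ∧ x ≤ 2 * (1 / 2 : ℝ) ^ k)) :
    x ≤ (1 / 2 : ℝ) ^ K := by
  by_contra! hK
  have hx0 : 0 < x := lt_trans (by positivity) hK
  obtain ⟨n, hn, hn'⟩ := exists_nat_pow_near_of_lt_one hx0 hx one_half_pos one_half_lt_one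
  have hnK : n < K :=
    (pow_lt_pow_iff_right_of_lt_one₀ one_half_pos one_half_lt_one).1 (hK.trans_le hn')
  exact h (n + 1) (mem_Icc.2 ⟨by lia, hnK⟩) ⟨hn, hn'.trans_eq (by ring)⟩

lemma le_two_pow_of_ceil_logb_le {x : ℝ} {K : ℕ} (hx : 0 < x) (h : ⌈Real.logb 2 x⌉ ≤ K) :
    x ≤ 2 ^ K := by
  have hlog : Real.logb 2 x ≤ K := by exact_mod_cast Int.ceil_le.1 h
  simpa only [Real.rpow_natCast] using (Real.logb_le_iff_le_rpow one_lt_two hx).1 hlog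

/-- `S 1, …, S K` are the dyadic buckets `2⁻ᵏ < Ds i ≤ 2¹⁻ᵏ` of `Ds` in `A`, and `S (K + 1)` is what
they leave over; the values of `S` at other indices are irrelevant. -/
structure IsDyadicBucketing {ι : Type*} [DecidableEq ι] (A : Finset ι) (Ds : ι → ℝ) (K : ℕ)
    (S : ℕ → Finset ι) : Prop where
  bucket_eq : ∀ k ∈ Icc 1 K,
    S k = A.filter fun i => (1 / 2 : ℝ) ^ k < Ds i ∧ Ds i ≤ 2 * (1 / 2 : ℝ) ^ k
  leftover_eq : S (K + 1) = A \ (Icc 1 K).biUnion S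

namespace IsDyadicBucketing

variable {ι : Type*} [DecidableEq ι] {A : Finset ι} {D Ds D' : ι → ℝ} {K : ℕ} {S : ℕ → Finset ι}

lemma mem_bucket (hS : IsDyadicBucketing A Ds K S) {k : ℕ} (hk : k ∈ Icc 1 K) {i : ι} :
    i ∈ S k ↔ i ∈ A ∧ (1 / 2 : ℝ) ^ k < Ds i ∧ Ds i ≤ 2 * (1 / 2 : ℝ) ^ k := by
  rw [hS.bucket_eq k hk, mem_filter]

lemma leftover_subset (hS : IsDyadicBucketing A Ds K S) : S (K + 1) ⊆ A :=
  hS.leftover_eq ▸ sdiff_subset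

lemma biUnion_subset (hS : IsDyadicBucketing A Ds K S) : (Icc 1 K).biUnion S ⊆ A :=
  Finset.biUnion_subset.2 fun _ hk _ hi => ((hS.mem_bucket hk).1 hi).1

lemma subset (hS : IsDyadicBucketing A Ds K S) {k : ℕ} (hk : k ∈ Icc 1 (K + 1)) : S k ⊆ A := by
  rw [← insert_Icc_right_eq_Icc_add_one (by lia), mem_insert] at hk
  rcases hk with rfl | hk
  · exact hS.leftover_subset
  · exact (subset_biUnion_of_mem S hk).trans hS.biUnion_subset

lemma le_of_mem_leftover (hS : IsDyadicBucketing A Ds K S) {i : ι} (hi : i ∈ S (K + 1))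
    (hDs : Ds i ≤ 1) : Ds i ≤ (1 / 2 : ℝ) ^ K := by
  rw [hS.leftover_eq, mem_sdiff, mem_biUnion] at hi
  exact le_half_pow_of_forall_not_dyadic hDs fun k hk hki =>
    hi.2 ⟨k, hk, (hS.mem_bucket hk).2 ⟨hi.1, hki⟩⟩

lemma sum_leftover_le (hS : IsDyadicBucketing A Ds K S) (hDs : ∀ i ∈ A, Ds i ≤ 1) :
    ∑ i ∈ S (K + 1), Ds i ≤ #A / 2 ^ K :=
  calc ∑ i ∈ S (K + 1), Ds i
      ≤ #(S (K + 1)) * (1 / 2 : ℝ) ^ K := by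
        rw [← nsmul_eq_mul]
        exact sum_le_card_nsmul _ _ _ fun i hi =>
          hS.le_of_mem_leftover hi (hDs i (hS.leftover_subset hi))
    _ ≤ #A * (1 / 2 : ℝ) ^ K := by
        gcongr
        exact hS.leftover_subset
    _ = #A / 2 ^ K := by rw [one_div_pow, mul_one_div]

lemma sum_le_sum_buckets_add_leftover (hS : IsDyadicBucketing A Ds K S) {f : ι → ℝ}
    (hf : ∀ i, 0 ≤ f i) :
    ∑ i ∈ A, f i ≤ ∑ k ∈ Icc 1 K, ∑ i ∈ S k, f i + ∑ i ∈ S (K + 1), f i := by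
  rw [← sum_sdiff hS.biUnion_subset, ← hS.leftover_eq, add_comm]
  gcongr
  exact sum_biUnion_le_of_nonneg _ S hf

lemma sum_abs_bucketFlattening_sub_le (hS : IsDyadicBucketing A Ds K S)
    (hD : ∀ i ∈ A, 0 ≤ D i) {k : ℕ} (hk : k ∈ Icc 1 K) :
    ∑ i ∈ S k, |bucketFlattening (S k) D Ds i - D i| ≤ 8 * pairDiscrepancy (S k) D Ds := by
  have hbucket := fun i (hi : i ∈ S k) => (hS.mem_bucket hk).1 hi
  have hratio : ∀ i ∈ S k, ∀ j ∈ S k, Ds i ≤ 2 * Ds j := fun i hi j hj => by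
    linarith [(hbucket i hi).2.2, (hbucket j hj).2.1]
  convert sum_abs_bucketFlattening_sub_le_mul_pairDiscrepancy
    (fun i hi => hD i (hbucket i hi).1) (fun i hi => lt_trans (by positivity) (hbucket i hi).2.1)
    hratio using 2
  norm_num

lemma sum_pairDiscrepancy_nonneg (hS : IsDyadicBucketing A Ds K S) (hD : ∀ i ∈ A, 0 ≤ D i) :
    0 ≤ ∑ k ∈ Icc 1 (K + 1), pairDiscrepancy (S k) D Ds :=
  sum_nonneg fun _ hk => pairDiscrepancy_nonneg fun i hi => hD i (hS.subset hk hi)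

lemma sum_abs_sub_le (hS : IsDyadicBucketing A Ds K S) (hD : ∀ i ∈ A, 0 ≤ D i)
    (hDs : ∀ i ∈ A, 0 ≤ Ds i)
    (hD' : ∀ k ∈ Icc 1 (K + 1), ∀ i ∈ S k, D' i = bucketFlattening (S k) D Ds i) :
    ∑ i ∈ A, |D' i - D i| ≤
      8 * ∑ k ∈ Icc 1 (K + 1), pairDiscrepancy (S k) D Ds + 2 * ∑ i ∈ S (K + 1), D i := by
  have hsum : ∀ k ∈ Icc 1 (K + 1),
      ∑ i ∈ S k, |D' i - D i| = ∑ i ∈ S k, |bucketFlattening (S k) D Ds i - D i| :=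
    fun k hk => sum_congr rfl fun i hi => by rw [hD' k hk i hi]
  have hbuckets : ∑ k ∈ Icc 1 K, ∑ i ∈ S k, |D' i - D i| ≤
      8 * ∑ k ∈ Icc 1 K, pairDiscrepancy (S k) D Ds := by
    rw [mul_sum]
    exact sum_le_sum fun k hk => (hsum k (Icc_subset_Icc_right (by lia) hk)).trans_le
      (hS.sum_abs_bucketFlattening_sub_le hD hk)
  have hleftover : ∑ i ∈ S (K + 1), |D' i - D i| ≤ 2 * ∑ i ∈ S (K + 1), D i :=
    (hsum (K + 1) (by simp)).trans_le <| sum_abs_bucketFlattening_sub_le_two_mul_sum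
      (fun i hi => hD i (hS.leftover_subset hi)) (fun i hi => hDs i (hS.leftover_subset hi))
  have hleftover_nonneg : 0 ≤ pairDiscrepancy (S (K + 1)) D Ds :=
    pairDiscrepancy_nonneg fun i hi => hD i (hS.leftover_subset hi)
  rw [sum_Icc_succ_top (by lia)]
  linarith [hS.sum_le_sum_buckets_add_leftover fun i => abs_nonneg (D' i - D i)]

lemma sum_leftover_le_of_ceil_logb_le (hS : IsDyadicBucketing A Ds K S) {ε : ℝ} (hε : 0 < ε)
    (hDs : ∀ i ∈ A, Ds i ≤ 1) (hK : ⌈Real.logb 2 (10 * #A / ε)⌉ ≤ K) :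
    ∑ i ∈ S (K + 1), Ds i ≤ ε / 10 := by
  refine (hS.sum_leftover_le hDs).trans ?_
  rcases A.eq_empty_or_nonempty with rfl | hA
  · simp only [card_empty, Nat.cast_zero, zero_div]
    positivity
  have hpow := le_two_pow_of_ceil_logb_le (by have := hA.card_pos; positivity) hK
  rw [div_le_iff₀ hε] at hpow
  rw [div_le_div_iff₀ (by positivity) (by norm_num)]
  linarith

end IsDyadicBucketing

theorem bucketed_pair_discrepancy_ge_general {ι : Type*} [DecidableEq ι] {A : Finset ι}
    {D Ds D' : ι → ℝ} {K : ℕ} {S : ℕ → Finset ι} {ε : ℝ} (hε : 0 < ε)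
    (hD : ∀ i ∈ A, 0 ≤ D i) (hDs0 : ∀ i ∈ A, 0 ≤ Ds i) (hDs1 : ∀ i ∈ A, Ds i ≤ 1)
    (hK : ⌈Real.logb 2 (10 * #A / ε)⌉ ≤ K) (hS : IsDyadicBucketing A Ds K S)
    (hleftover : ∑ i ∈ S (K + 1), D i - ∑ i ∈ S (K + 1), Ds i ≤ ε / 5)
    (hD' : ∀ k ∈ Icc 1 (K + 1), ∀ i ∈ S k, D' i = bucketFlattening (S k) D Ds i) :
    (1 / 4) * ((1 / 2) * ∑ i ∈ A, |D' i - D i| - 3 * ε / 10) ≤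
      ∑ k ∈ Icc 1 (K + 1), pairDiscrepancy (S k) D Ds := by
  linarith [hS.sum_abs_sub_le hD hDs0 hD', hS.sum_leftover_le_of_ceil_logb_le hε hDs1 hK]

/-- Bucketing lower bound for the PAIRCOND identity tester: with `S_1, …, S_K` the dyadic
buckets of `D*`, `S_{K+1}` the leftover, and `D'` the bucket-flattened version of `D`, the
expected pair discrepancy (drawing `i ~ D`, then `j` uniform in the bucket of `i`) is at
least `(1/16)·(d_TV(D', D) − 3ε/10)`. -/
theorem bucketed_pair_discrepancy_ge
    (N : ℕ) (ε : ℝ) (hε0 : 0 < ε) (hε1 : ε ≤ 1)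
    (D Ds : ℕ → ℝ)
    (hD0 : ∀ i ∈ Icc 1 N, 0 ≤ D i) (hD1 : ∑ i ∈ Icc 1 N, D i = 1)
    (hDs0 : ∀ i ∈ Icc 1 N, 0 ≤ Ds i) (hDs1 : ∑ i ∈ Icc 1 N, Ds i = 1)
    (K : ℕ) (hK : (K : ℤ) = ⌈Real.logb 2 (10 * N / ε)⌉)
    (S : ℕ → Finset ℕ)
    (hS : ∀ k ∈ Icc 1 K, S k = (Icc 1 N).filter
      (fun i => (1 / 2 : ℝ) ^ k < Ds i ∧ Ds i ≤ 2 * (1 / 2 : ℝ) ^ k))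
    (hSlast : S (K + 1) = Icc 1 N \ (Icc 1 K).biUnion S)
    (ha : (1 / 2) * ∑ k ∈ Icc 1 (K + 1),
      |(∑ i ∈ S k, D i) - ∑ i ∈ S k, Ds i| ≤ ε / 10)
    (hb : 0 < ∑ i ∈ S (K + 1), D i → 0 < ∑ i ∈ S (K + 1), Ds i)
    (D' : ℕ → ℝ)
    (hD' : ∀ k ∈ Icc 1 (K + 1), ∀ i ∈ S k,
      D' i = if 0 < ∑ j ∈ S k, Ds j
        then (∑ j ∈ S k, D j) * Ds i / (∑ j ∈ S k, Ds j) else 0) :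
    (1 / 16) * ((1 / 2) * ∑ i ∈ Icc 1 N, |D' i - D i| - 3 * ε / 10) ≤
      ∑ k ∈ Icc 1 (K + 1), ∑ i ∈ S k, ∑ j ∈ S k,
        (if D i + D j = 0 ∨ Ds i + Ds j = 0 then 0
          else (D i / ((S k).card : ℝ)) *
            |D i / (D i + D j) - Ds i / (Ds i + Ds j)|) := by
  change _ ≤ ∑ k ∈ Icc 1 (K + 1), pairDiscrepancy (S k) D Ds
  have hbuckets : IsDyadicBucketing (Icc 1 N) Ds K S := ⟨hS, hSlast⟩
  have hleftover : ∑ i ∈ S (K + 1), D i - ∑ i ∈ S (K + 1), Ds i ≤ ε / 5 := by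
    have hsingle := single_le_sum
      (f := fun k => |∑ i ∈ S k, D i - ∑ i ∈ S k, Ds i|) (fun _ _ => abs_nonneg _)
      (right_mem_Icc.2 (Nat.le_add_left 1 K))
    linarith [(le_abs_self _).trans hsingle]
  have hgeneral := bucketed_pair_discrepancy_ge_general hε0 hD0 hDs0
    (fun i hi => hDs1 ▸ single_le_sum hDs0 hi) (by simpa using hK.ge) hbuckets hleftover hD'
  linarith [hbuckets.sum_pairDiscrepancy_nonneg hD0]
end

section
/- Let D and D* be distributions over [N], and let S_1, …, S_m be a partition of [N] such that for every k, D*(S_k) > 0 whenever D(S_k) > 0. Define D' over [N] by D'(i) = D(S_k)·D*(i)/D*(S_k) for i ∈ S_k whenever D*(S_k) > 0, and D'(i) = 0 otherwise. Then D' is a distribution over [N], and d_TV(D*, D') = (1/2)·Σ_{k=1}^m |D*(S_k) − D(S_k)|. -/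
open Finset

/-!
On a part `S k` of positive `Ds`-mass, the difference `Ds - D'` is `Ds` rescaled by
`(Ds(S k) - D(S k)) / Ds(S k)`. As `Ds` is nonnegative, this difference has constant sign on `S k`,
so its absolute values add up to `|Ds(S k) - D(S k)|`. A part of zero `Ds`-mass also has zero
`D`-mass, so it contributes nothing to either side.
-/

section ScaleToMass

variable {ι K : Type*} [Field K]

/-- The multiple of the weight function `f` whose total over `s` is `c`; as `x / 0 = 0`, it is the
zero function when `f` has total zero over `s`. -/
def scaleToMass (s : Finset ι) (c : K) (f : ι → K) (i : ι) : K :=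
  c * f i / ∑ j ∈ s, f j

variable {s : Finset ι} {f : ι → K} {i : ι} {c : K}

lemma scaleToMass_sub (s : Finset ι) (c d : K) (f : ι → K) (i : ι) :
    scaleToMass s (c - d) f i = scaleToMass s c f i - scaleToMass s d f i := by
  simp only [scaleToMass, sub_mul, sub_div]

lemma sum_scaleToMass (hc : ∑ i ∈ s, f i = 0 → c = 0) : ∑ i ∈ s, scaleToMass s c f i = c := by
  simp only [scaleToMass, ← sum_div, ← mul_sum]
  exact mul_div_cancel_of_imp hc

variable [LinearOrder K] [IsStrictOrderedRing K]

lemma scaleToMass_nonneg (hc : 0 ≤ c) (hf : ∀ j ∈ s, 0 ≤ f j) (hi : i ∈ s) :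
    0 ≤ scaleToMass s c f i :=
  div_nonneg (mul_nonneg hc (hf i hi)) (sum_nonneg hf)

lemma scaleToMass_sum_self (hf : ∀ j ∈ s, 0 ≤ f j) (hi : i ∈ s) :
    scaleToMass s (∑ j ∈ s, f j) f i = f i :=
  mul_div_cancel_left_of_imp fun h => (sum_eq_zero_iff_of_nonneg hf).1 h i hi

lemma abs_scaleToMass (hf : ∀ j ∈ s, 0 ≤ f j) (hi : i ∈ s) :
    |scaleToMass s c f i| = scaleToMass s |c| f i := by
  simp only [scaleToMass, abs_div, abs_mul, abs_of_nonneg (hf i hi), abs_of_nonneg (sum_nonneg hf)]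

lemma sum_abs_sub_scaleToMass (hf : ∀ i ∈ s, 0 ≤ f i) (hc : ∑ i ∈ s, f i = 0 → c = 0) :
    ∑ i ∈ s, |f i - scaleToMass s c f i| = |∑ i ∈ s, f i - c| := by
  have abs_sub_eq : ∀ i ∈ s,
      |f i - scaleToMass s c f i| = scaleToMass s |∑ j ∈ s, f j - c| f i := fun i hi => by
    rw [← abs_scaleToMass hf hi, scaleToMass_sub, scaleToMass_sum_self hf hi]
  rw [sum_congr rfl abs_sub_eq]
  exact sum_scaleToMass fun h => by rw [h, hc h, sub_zero, abs_zero]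

lemma scaleToMass_eq_ite (hf : ∀ j ∈ s, 0 ≤ f j) :
    scaleToMass s c f i = if 0 < ∑ j ∈ s, f j then c * f i / ∑ j ∈ s, f j else 0 := by
  split_ifs with hpos
  · rfl
  · rw [scaleToMass, (sum_nonneg hf).eq_of_not_lt' hpos, div_zero]

end ScaleToMass

theorem flattened_distribution_tv_general {ι κ K : Type*} [DecidableEq ι]
    [Field K] [LinearOrder K] [IsStrictOrderedRing K]
    {t : Finset ι} {P : Finset κ} {S : κ → Finset ι} {D Ds D' : ι → K}
    (hD : ∀ i ∈ t, 0 ≤ D i) (hDs : ∀ i ∈ t, 0 ≤ Ds i)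
    (hdisj : (P : Set κ).PairwiseDisjoint S) (hcover : P.biUnion S = t)
    (hpos : ∀ k ∈ P, 0 < ∑ i ∈ S k, D i → 0 < ∑ i ∈ S k, Ds i)
    (hD' : ∀ k ∈ P, ∀ i ∈ S k,
      D' i = if 0 < ∑ j ∈ S k, Ds j
        then (∑ j ∈ S k, D j) * Ds i / (∑ j ∈ S k, Ds j) else 0) :
    (∀ i ∈ t, 0 ≤ D' i) ∧ ∑ i ∈ t, D' i = ∑ i ∈ t, D i ∧
      ∑ i ∈ t, |Ds i - D' i| = ∑ k ∈ P, |∑ i ∈ S k, Ds i - ∑ i ∈ S k, D i| := by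
  subst hcover
  have hD_part : ∀ k ∈ P, ∀ i ∈ S k, 0 ≤ D i := fun k hk i hi => hD i (mem_biUnion.2 ⟨k, hk, hi⟩)
  have hDs_part : ∀ k ∈ P, ∀ i ∈ S k, 0 ≤ Ds i := fun k hk i hi =>
    hDs i (mem_biUnion.2 ⟨k, hk, hi⟩)
  have hD'_eq : ∀ k ∈ P, ∀ i ∈ S k, D' i = scaleToMass (S k) (∑ j ∈ S k, D j) Ds i :=
    fun k hk i hi => (hD' k hk i hi).trans (scaleToMass_eq_ite (hDs_part k hk)).symm
  have hmass_zero : ∀ k ∈ P, ∑ i ∈ S k, Ds i = 0 → ∑ i ∈ S k, D i = 0 := fun k hk hzero =>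
    (sum_nonneg (hD_part k hk)).eq_of_not_lt' fun h => (hpos k hk h).ne' hzero
  refine ⟨fun i hi => ?_, ?_, ?_⟩
  · obtain ⟨k, hk, hik⟩ := mem_biUnion.1 hi
    rw [hD'_eq k hk i hik]
    exact scaleToMass_nonneg (sum_nonneg (hD_part k hk)) (hDs_part k hk) hik
  · rw [sum_biUnion hdisj, sum_biUnion hdisj]
    refine sum_congr rfl fun k hk => ?_
    rw [sum_congr rfl (hD'_eq k hk), sum_scaleToMass (hmass_zero k hk)]
  · rw [sum_biUnion hdisj]
    refine sum_congr rfl fun k hk => ?_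
    rw [← sum_abs_sub_scaleToMass (hDs_part k hk) (hmass_zero k hk)]
    exact sum_congr rfl fun i hi => by rw [hD'_eq k hk i hi]

/-- If `S_1, …, S_m` partitions `[N]`, `D*(S_k) > 0` whenever `D(S_k) > 0`, and `D'` is
obtained from `D*` by rescaling each part to have `D`-mass, then `D'` is a distribution
and `d_TV(D*, D') = (1/2)·Σ_k |D*(S_k) − D(S_k)|`. -/
theorem flattened_distribution_tv
    (N m : ℕ) (D Ds : ℕ → ℝ)
    (hD0 : ∀ i ∈ Icc 1 N, 0 ≤ D i) (hD1 : ∑ i ∈ Icc 1 N, D i = 1)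
    (hDs0 : ∀ i ∈ Icc 1 N, 0 ≤ Ds i) (hDs1 : ∑ i ∈ Icc 1 N, Ds i = 1)
    (S : ℕ → Finset ℕ)
    (hdisj : ∀ k₁ ∈ Icc 1 m, ∀ k₂ ∈ Icc 1 m, k₁ ≠ k₂ → Disjoint (S k₁) (S k₂))
    (hcover : (Icc 1 m).biUnion S = Icc 1 N)
    (hpos : ∀ k ∈ Icc 1 m, 0 < ∑ i ∈ S k, D i → 0 < ∑ i ∈ S k, Ds i)
    (D' : ℕ → ℝ)
    (hD' : ∀ k ∈ Icc 1 m, ∀ i ∈ S k,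
      D' i = if 0 < ∑ j ∈ S k, Ds j
        then (∑ j ∈ S k, D j) * Ds i / (∑ j ∈ S k, Ds j) else 0) :
    (∀ i ∈ Icc 1 N, 0 ≤ D' i) ∧ (∑ i ∈ Icc 1 N, D' i = 1) ∧
    (1 / 2) * ∑ i ∈ Icc 1 N, |Ds i - D' i| =
      (1 / 2) * ∑ k ∈ Icc 1 m, |(∑ i ∈ S k, Ds i) - ∑ i ∈ S k, D i| := by
  obtain ⟨hnonneg, hmass, hdist⟩ := flattened_distribution_tv_general hD0 hDs0
    (fun k₁ hk₁ k₂ hk₂ => hdisj k₁ hk₁ k₂ hk₂) hcover hpos hD'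
  exact ⟨hnonneg, hmass.trans hD1, congrArg (1 / 2 * ·) hdist⟩
end

section
/- Let P and P* be distributions over [M], let 1 ≤ z ≤ M with P([z]) > 0 where [z] = {1, …, z}, and let S_1, …, S_k be a partition of [z] such that P*(S_j) ≤ (2/k)·P*([z]) for every 1 ≤ j ≤ k. Suppose that Σ_{j=1}^k min(P(S_j)/P([z]), 1/k) ≤ 3ε. Then Σ_{i=1}^z min(P(i), P*(i)) ≤ 6ε. -/
open Finset

/-!
For every part `S j`, the overlap of `P` and `Q` on `S j` is at most `P (S j)`, hence at most the
conditional probability `P (S j) / P T`, because `P T ≤ 1`; it is also at most `Q (S j) ≤ C * w j`.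
Overlaps are nonnegative, so the overlap on `T` is at most the sum of those on the parts of a cover,
which is at most `C` times the overlap of the reduced distribution with `w`.
-/

section Cover

variable {ι κ : Type*} [DecidableEq ι]

lemma sum_biUnion_le_sum_sum_of_nonneg {N : Type*} [AddCommMonoid N] [PartialOrder N]
    [IsOrderedAddMonoid N] {K : Finset κ} {S : κ → Finset ι} {f : ι → N}
    (hf : ∀ i ∈ K.biUnion S, 0 ≤ f i) :
    ∑ i ∈ K.biUnion S, f i ≤ ∑ j ∈ K, ∑ i ∈ S j, f i := by
  have biUnion_eq : K.biUnion S = (K.sigma S).image Sigma.snd := by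
    ext i
    simp
  rw [biUnion_eq] at hf ⊢
  exact (sum_image_le_of_nonneg hf).trans_eq (sum_sigma K S fun x ↦ f x.2)

variable {R : Type*} [Field R] [LinearOrder R] [IsStrictOrderedRing R]

lemma min_le_mul_min_div {a b m w C : R} (ha : 0 ≤ a) (hm : 0 < m) (hm1 : m ≤ 1) (hC : 1 ≤ C)
    (hb : b ≤ C * w) : min a b ≤ C * min (a / m) w := by
  rw [mul_min_of_nonneg _ _ (zero_le_one.trans hC)]
  refine min_le_min ?_ hb
  calc
    a ≤ a / m := le_div_self ha hm hm1
    _ ≤ C * (a / m) := le_mul_of_one_le_left (div_nonneg ha hm.le) hC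

lemma sum_min_le_mul_sum_min_div {T : Finset ι} {K : Finset κ} {S : κ → Finset ι} {P Q : ι → R}
    {w : κ → R} {C : R} (hC : 1 ≤ C)
    (hP : ∀ i ∈ T, 0 ≤ P i) (hQ : ∀ i ∈ T, 0 ≤ Q i)
    (hPT : 0 < ∑ i ∈ T, P i) (hPT1 : ∑ i ∈ T, P i ≤ 1) (hcover : K.biUnion S = T)
    (hQS : ∀ j ∈ K, ∑ i ∈ S j, Q i ≤ C * w j) :
    ∑ i ∈ T, min (P i) (Q i) ≤ C * ∑ j ∈ K, min ((∑ i ∈ S j, P i) / ∑ i ∈ T, P i) (w j) := by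
  have overlap_part_le (j : κ) (hj : j ∈ K) : ∑ i ∈ S j, min (P i) (Q i) ≤
      C * min ((∑ i ∈ S j, P i) / ∑ i ∈ T, P i) (w j) := by
    have hST : S j ⊆ T := hcover ▸ subset_biUnion_of_mem S hj
    exact sum_min_le.trans <|
      min_le_mul_min_div (sum_nonneg fun i hi ↦ hP i (hST hi)) hPT hPT1 hC (hQS j hj)
  calc
    ∑ i ∈ T, min (P i) (Q i) ≤ ∑ j ∈ K, ∑ i ∈ S j, min (P i) (Q i) := by
      subst hcover
      exact sum_biUnion_le_sum_sum_of_nonneg fun i hi ↦ le_min (hP i hi) (hQ i hi)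
    _ ≤ ∑ j ∈ K, C * min ((∑ i ∈ S j, P i) / ∑ i ∈ T, P i) (w j) := sum_le_sum overlap_part_le
    _ = C * ∑ j ∈ K, min ((∑ i ∈ S j, P i) / ∑ i ∈ T, P i) (w j) := (mul_sum ..).symm

theorem sum_min_le_of_reduced_overlap_small_general {U T : Finset ι} {K : Finset κ}
    {S : κ → Finset ι} {P Q : ι → R} {w : κ → R} {C ε : R} (hTU : T ⊆ U) (hC : 1 ≤ C)
    (hP : ∀ i ∈ U, 0 ≤ P i) (hP1 : ∑ i ∈ U, P i = 1)
    (hQ : ∀ i ∈ U, 0 ≤ Q i) (hQ1 : ∑ i ∈ U, Q i = 1)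
    (hPT : 0 < ∑ i ∈ T, P i) (hcover : K.biUnion S = T) (hw : ∀ j ∈ K, 0 ≤ w j)
    (hQS : ∀ j ∈ K, ∑ i ∈ S j, Q i ≤ C * w j * ∑ i ∈ T, Q i)
    (hsmall : ∑ j ∈ K, min ((∑ i ∈ S j, P i) / ∑ i ∈ T, P i) (w j) ≤ ε) :
    ∑ i ∈ T, min (P i) (Q i) ≤ C * ε := by
  have hC0 : 0 ≤ C := zero_le_one.trans hC
  have hPT1 : ∑ i ∈ T, P i ≤ 1 :=
    (sum_le_sum_of_subset_of_nonneg hTU fun i hi _ ↦ hP i hi).trans_eq hP1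
  have hQT1 : ∑ i ∈ T, Q i ≤ 1 :=
    (sum_le_sum_of_subset_of_nonneg hTU fun i hi _ ↦ hQ i hi).trans_eq hQ1
  have hQS' (j : κ) (hj : j ∈ K) : ∑ i ∈ S j, Q i ≤ C * w j :=
    (hQS j hj).trans <| mul_le_of_le_one_right (mul_nonneg hC0 (hw j hj)) hQT1
  calc
    ∑ i ∈ T, min (P i) (Q i) ≤ C * ∑ j ∈ K, min ((∑ i ∈ S j, P i) / ∑ i ∈ T, P i) (w j) :=
      sum_min_le_mul_sum_min_div hC (fun i hi ↦ hP i (hTU hi)) (fun i hi ↦ hQ i (hTU hi))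
        hPT hPT1 hcover hQS'
    _ ≤ C * ε := mul_le_mul_of_nonneg_left hsmall hC0

end Cover

/-- If `[z]` is partitioned into `S_1, …, S_k` with `P*(S_j) ≤ (2/k)·P*([z])` and the
reduced distribution of `P` on the parts has small overlap with uniform, i.e.
`Σ_j min(P(S_j)/P([z]), 1/k) ≤ 3ε`, then `Σ_{i ≤ z} min(P(i), P*(i)) ≤ 6ε`. -/
theorem sum_min_le_of_reduced_overlap_small
    (M z k : ℕ) (hz1 : 1 ≤ z) (hzM : z ≤ M) (hk : 1 ≤ k) (ε : ℝ)
    (P Ps : ℕ → ℝ)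
    (hP0 : ∀ i ∈ Icc 1 M, 0 ≤ P i) (hP1 : ∑ i ∈ Icc 1 M, P i = 1)
    (hPs0 : ∀ i ∈ Icc 1 M, 0 ≤ Ps i) (hPs1 : ∑ i ∈ Icc 1 M, Ps i = 1)
    (hPz : 0 < ∑ i ∈ Icc 1 z, P i)
    (S : ℕ → Finset ℕ)
    (hdisj : ∀ j₁ ∈ Icc 1 k, ∀ j₂ ∈ Icc 1 k, j₁ ≠ j₂ → Disjoint (S j₁) (S j₂))
    (hcover : (Icc 1 k).biUnion S = Icc 1 z)
    (hSbound : ∀ j ∈ Icc 1 k, ∑ i ∈ S j, Ps i ≤ (2 / (k : ℝ)) * ∑ i ∈ Icc 1 z, Ps i)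
    (hsmall : ∑ j ∈ Icc 1 k,
      min ((∑ i ∈ S j, P i) / (∑ i ∈ Icc 1 z, P i)) (1 / (k : ℝ)) ≤ 3 * ε) :
    ∑ i ∈ Icc 1 z, min (P i) (Ps i) ≤ 6 * ε := by
  have h := sum_min_le_of_reduced_overlap_small_general (Icc_subset_Icc_right hzM) one_le_two
    hP0 hP1 hPs0 hPs1 hPz hcover (fun _ _ ↦ by positivity)
    (by simpa only [mul_one_div] using hSbound) hsmall
  linarith
end
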